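/- arXiv:1402.0272 — 3 statements merged into one kernel-verified Lean document; each statement's English description precedes it below -/
import Mathlib

section
/- For every simple graph H with i isolated vertices and q edges, every simple graph G with average degree at least i + 6.929·q contains H as a minor. -/
/-!
Write `n`, `e` for the numbers of vertices and edges of `G`, `i`, `q` for the numbers of isolated
vertices and edges of `H`, and `D = i + 6.929 q`.

*Tree components.* If `H` has a component `T` that is a tree with `k` vertices, a copy of `T` is
removed from `G` and induction is applied to `H - T`. For `k = 1` a vertex of minimum degree is
removed; the average degree drops by at most `1`, as does `i`. For `k ≥ 2` the copy is found in a
subgraph of minimum degree at least `D / 2 ≥ k - 1`; at most `k(n - 1)` edges are lost, which is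
compensated by the `k - 1` edges missing from `H - T`, since `6.929 (k - 1) ≥ 2k`.

*A dense minor.* Suppose that `H` has no tree component; then `2e ≥ Dn` gives `e ≥ κn` with
`κ = 3.4645 q`. In a minor that is minimal subject to this bound and has `κ(n - 1) + K` edges,
`K ≥ κ`, all degrees exceed `K` and all edges lie in more than `K - 1` triangles, so the closed
neighbourhood of a vertex of minimum degree `m ≤ 2K` induces a graph with `m + 1` vertices and
minimum degree greater than `K`. A second minor is taken, minimal with respect to having at least
`φ(x) = 0.08 x² + 0.375 K x - 0.07 K²` edges on `x` vertices. The quadratic `φ` is small enough for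
the previous graph to qualify, so large that the minimal minor cannot shrink to `0.3 K` vertices,
and such that the closed neighbourhood of a vertex of minimum degree of the minimal minor induces a
graph `M` with `2 δ(M) + 1 ≥ |M| + q` (`SimpleGraph.exists_dense_minor`).

*Greedy embedding.* In `M` every degree is at least `q`, and any two vertices have at least `q - 1`
common neighbours. The vertices of `H` are embedded one after the other, with stars as branch sets
(`StarModel`). A vertex with at most one earlier neighbour costs one vertex of `M`. A vertex with
`b ≥ 2` earlier neighbours costs only `b - 1`: its centre is a common neighbour of the centres of two
earlier neighbours, and each of the other earlier neighbours requires one common neighbour. As every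
component of `H` contains a cycle, and its order is chosen to be connected, the total number of
vertices used never exceeds what `M` can supply (`HasStarModel.greedy`).
-/

open SimpleGraph

/-- `H` is a minor of `G`: there is a minor model of `H` in `G`, i.e. pairwise disjoint
connected (nonempty) branch sets in `G`, one for each vertex of `H`, with an edge of `G`
between the branch sets of any two adjacent vertices of `H`.  Equivalently, a graph
isomorphic to `H` can be obtained from a subgraph of `G` by contracting edges. -/
def SimpleGraph.IsMinorOf {W V : Type*} (H : SimpleGraph W) (G : SimpleGraph V) : Prop :=
  ∃ B : W → Set V,
    (∀ w, (G.induce (B w)).Connected) ∧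
    (Pairwise fun w₁ w₂ => Disjoint (B w₁) (B w₂)) ∧
    ∀ ⦃w₁ w₂⦄, H.Adj w₁ w₂ → ∃ v₁ ∈ B w₁, ∃ v₂ ∈ B w₂, G.Adj v₁ v₂

/-- The average degree `2m/n` of a graph with `n` vertices and `m` edges. -/
noncomputable def SimpleGraph.averageDegree {V : Type*} (G : SimpleGraph V) : ℝ :=
  2 * G.edgeSet.ncard / Nat.card V


/-! ### Minors -/

/-- Substituting one minor model into another: the branch set of `u` is the union of the inner branch
sets over the outer branch set of `u`. -/
theorem SimpleGraph.IsMinorOf.trans {U W V : Type*} {H : SimpleGraph U} {M : SimpleGraph W}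
    {G : SimpleGraph V} (h₁ : H.IsMinorOf M) (h₂ : M.IsMinorOf G) : H.IsMinorOf G := by
  obtain ⟨B, hBc, hBd, hBa⟩ := h₁
  obtain ⟨C, hCc, hCd, hCa⟩ := h₂
  refine ⟨fun u => ⋃ w ∈ B u, C w, fun u => ?_, fun u₁ u₂ hu => ?_, fun u₁ u₂ hu => ?_⟩
  · have hsub : ∀ w ∈ B u, C w ⊆ ⋃ w ∈ B u, C w := fun w hw => Set.subset_biUnion_of_mem hw
    obtain ⟨⟨w₀, hw₀⟩⟩ := (hBc u).nonempty
    obtain ⟨⟨x₀, hx₀⟩⟩ := (hCc w₀).nonempty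
    have key : ∀ b : B u, (M.induce (B u)).Reachable ⟨w₀, hw₀⟩ b → ∀ y (hy : y ∈ C b),
        (G.induce (⋃ w ∈ B u, C w)).Reachable ⟨x₀, hsub _ hw₀ hx₀⟩ ⟨y, hsub _ b.2 hy⟩ := by
      intro b hb
      rw [SimpleGraph.reachable_iff_reflTransGen] at hb
      induction hb with
      | refl =>
        intro y hy
        exact ((hCc w₀).preconnected ⟨x₀, hx₀⟩ ⟨y, hy⟩).map
          (G.induceHomOfLE (hsub _ hw₀)).toHom
      | @tail b c _ hbc ih =>
        intro y hy
        obtain ⟨p, hp, p', hp', hpp⟩ := hCa (show M.Adj b c from hbc)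
        refine (ih p hp).trans (SimpleGraph.Reachable.trans (v := ⟨p', hsub _ c.2 hp'⟩) ?_ ?_)
        · exact SimpleGraph.Adj.reachable (by simpa using hpp)
        · exact ((hCc c).preconnected ⟨p', hp'⟩ ⟨y, hy⟩).map
            (G.induceHomOfLE (hsub _ c.2)).toHom
    rw [SimpleGraph.connected_iff_exists_forall_reachable]
    refine ⟨⟨x₀, hsub _ hw₀ hx₀⟩, ?_⟩
    rintro ⟨y, hy⟩
    obtain ⟨w, hw, hyw⟩ := Set.mem_iUnion₂.1 hy
    exact key ⟨w, hw⟩ ((hBc u).preconnected _ _) y hyw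
  · simp only [Set.disjoint_iUnion_left, Set.disjoint_iUnion_right]
    intro w hw w' hw'
    refine hCd fun h => ?_
    subst h
    exact Set.disjoint_left.1 (hBd hu) hw' hw
  · obtain ⟨v₁, h1, v₂, h2, h⟩ := hBa hu
    obtain ⟨x, hx, y, hy, hxy⟩ := hCa h
    exact ⟨x, Set.mem_biUnion h1 hx, y, Set.mem_biUnion h2 hy, hxy⟩

theorem SimpleGraph.induce_star_connected {V : Type*} (G : SimpleGraph V) (s : Set V) (c : V)
    (hc : c ∈ s) (hs : ∀ x ∈ s, x = c ∨ G.Adj c x) : (G.induce s).Connected := by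
  rw [SimpleGraph.connected_iff_exists_forall_reachable]
  refine ⟨⟨c, hc⟩, ?_⟩
  rintro ⟨x, hx⟩
  rcases hs x hx with rfl | h
  · exact SimpleGraph.Reachable.refl _
  · exact SimpleGraph.Adj.reachable (by simpa using h)

theorem SimpleGraph.isMinorOf_induce {V : Type*} (G : SimpleGraph V) (s : Set V) :
    (G.induce s).IsMinorOf G := by
  refine ⟨fun v => {v.1}, fun v => G.induce_star_connected _ v.1 rfl (by simp), ?_, ?_⟩
  · intro a b hab
    simpa [Subtype.ext_iff, eq_comm] using hab
  · intro a b hab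
    exact ⟨a, rfl, b, rfl, hab⟩

/-- The contraction of the edge `xy` of `G`: the vertex `y` is removed and its neighbours are
joined to `x`. -/
def SimpleGraph.contractEdge {V : Type*} (G : SimpleGraph V) (x y : V) :
    SimpleGraph ↥({y}ᶜ : Set V) :=
  (G ⊔ SimpleGraph.fromEdgeSet {e | ∃ b, G.Adj y b ∧ e = s(x, b)}).induce {y}ᶜ

theorem SimpleGraph.isMinorOf_contractEdge {V : Type*} (G : SimpleGraph V) {x y : V}
    (hxy : G.Adj x y) : (G.contractEdge x y).IsMinorOf G := by
  refine ⟨fun v => {z | z = v.1 ∨ (v.1 = x ∧ z = y)}, fun v => ?_, ?_, ?_⟩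
  · refine G.induce_star_connected _ v.1 (Or.inl rfl) ?_
    rintro z (rfl | ⟨h, rfl⟩)
    · exact Or.inl rfl
    · exact Or.inr (h ▸ hxy)
  · rintro ⟨a, ha⟩ ⟨b, hb⟩ hab
    rw [Set.disjoint_left]
    have ha : a ≠ y := ha
    have hb : b ≠ y := hb
    have : a ≠ b := fun h => hab (Subtype.ext h)
    simp only [Set.mem_ofPred_eq]
    grind
  · rintro ⟨a, ha⟩ ⟨b, hb⟩ hab
    simp only [SimpleGraph.contractEdge, SimpleGraph.comap_adj, SimpleGraph.sup_adj,
      SimpleGraph.fromEdgeSet_adj, Function.Embedding.subtype_apply, Set.mem_ofPred_eq,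
      Sym2.eq_iff] at hab
    rcases hab with h | ⟨⟨c, hc, ⟨rfl, rfl⟩ | ⟨rfl, rfl⟩⟩, -⟩
    · exact ⟨a, Or.inl rfl, b, Or.inl rfl, h⟩
    · exact ⟨y, Or.inr ⟨rfl, rfl⟩, b, Or.inl rfl, hc⟩
    · exact ⟨a, Or.inl rfl, y, Or.inr ⟨rfl, rfl⟩, hc.symm⟩

/-! ### Counting edges -/

/-- The number of edges of `G` with both ends in `s`. -/
noncomputable def SimpleGraph.edgesIn {V : Type*} (G : SimpleGraph V) (s : Set V) : ℕ :=
  {e ∈ G.edgeSet | ∀ v ∈ e, v ∈ s}.ncard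

theorem SimpleGraph.edgesIn_univ {V : Type*} (G : SimpleGraph V) :
    G.edgesIn Set.univ = G.edgeSet.ncard := by
  simp [SimpleGraph.edgesIn]

theorem SimpleGraph.edgesIn_empty {V : Type*} (G : SimpleGraph V) : G.edgesIn ∅ = 0 := by
  have : {e ∈ G.edgeSet | ∀ v ∈ e, v ∈ (∅ : Set V)} = ∅ := by
    ext e
    induction e with | _ a b
    simp only [Set.mem_ofPred_eq, Set.mem_empty_iff_false, iff_false, not_and]
    exact fun _ h => h a (Sym2.mem_mk_left a b)
  rw [SimpleGraph.edgesIn, this, Set.ncard_empty]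

theorem SimpleGraph.edgesIn_mono {V : Type*} [Finite V] {G G' : SimpleGraph V} (h : G ≤ G')
    {s t : Set V} (hst : s ⊆ t) : G.edgesIn s ≤ G'.edgesIn t :=
  Set.ncard_le_ncard fun _ he => ⟨SimpleGraph.edgeSet_mono h he.1, fun v hv => hst (he.2 v hv)⟩

theorem SimpleGraph.ncard_edgeSet_induce {V : Type*} (G : SimpleGraph V) (s : Set V) :
    (G.induce s).edgeSet.ncard = G.edgesIn s := by
  rw [SimpleGraph.edgesIn, ← Set.ncard_image_of_injective _
    (Sym2.map.injective (Subtype.val_injective (p := (· ∈ s))))]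
  congr 1
  ext e
  induction e with | _ a b
  simp only [Set.mem_image, Set.mem_ofPred_eq, SimpleGraph.mem_edgeSet, Sym2.mem_iff]
  constructor
  · rintro ⟨f, hf, hfe⟩
    induction f with | _ c d
    simp only [Sym2.map_mk, Sym2.eq_iff] at hfe
    have hf : G.Adj c d := hf
    rcases hfe with ⟨rfl, rfl⟩ | ⟨rfl, rfl⟩
    · exact ⟨hf, by rintro v (rfl | rfl) <;> simp⟩
    · exact ⟨hf.symm, by rintro v (rfl | rfl) <;> simp⟩
  · rintro ⟨h, hs⟩
    exact ⟨s(⟨a, hs a (Or.inl rfl)⟩, ⟨b, hs b (Or.inr rfl)⟩), h, rfl⟩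

theorem SimpleGraph.edgesIn_insert {V : Type*} [Finite V] (G : SimpleGraph V) {s : Set V} {w : V}
    (hw : w ∉ s) : G.edgesIn (insert w s) = G.edgesIn s + (G.neighborSet w ∩ s).ncard := by
  have hinj : Function.Injective fun v : V => s(w, v) := by
    intro a b h
    exact Sym2.congr_right.1 h
  rw [SimpleGraph.edgesIn, SimpleGraph.edgesIn, ← Set.ncard_image_of_injective _ hinj,
    ← Set.ncard_union_eq]
  · congr 1
    ext e
    induction e with | _ a b
    simp only [Set.mem_ofPred_eq, SimpleGraph.mem_edgeSet, Sym2.mem_iff, Set.mem_insert_iff,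
      Set.mem_union, Set.mem_image, Set.mem_inter_iff, SimpleGraph.mem_neighborSet, Sym2.eq_iff]
    have := @SimpleGraph.Adj.symm _ G a b
    constructor
    · rintro ⟨h, hs⟩
      have hne := h.ne
      have ha := hs a (Or.inl rfl)
      have hb := hs b (Or.inr rfl)
      by_cases haw : a = w
      · exact Or.inr ⟨b, by grind⟩
      · by_cases hbw : b = w
        · exact Or.inr ⟨a, by grind⟩
        · exact Or.inl ⟨h, by grind⟩
    · rintro (⟨h, hs⟩ | ⟨v, ⟨h, hv⟩, ⟨rfl, rfl⟩ | ⟨rfl, rfl⟩⟩)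
      · exact ⟨h, fun v hv => Or.inr (hs v hv)⟩
      · exact ⟨h, by grind⟩
      · exact ⟨h.symm, by grind⟩
  · rw [Set.disjoint_left]
    rintro _ ⟨-, h⟩ ⟨v, -, rfl⟩
    exact hw (h w (by simp))

theorem SimpleGraph.edgesIn_compl_singleton {V : Type*} [Finite V] (G : SimpleGraph V) (y : V) :
    G.edgeSet.ncard = G.edgesIn {y}ᶜ + (G.neighborSet y).ncard := by
  have h := G.edgesIn_insert (s := {y}ᶜ) (w := y) (by simp)
  have h1 : insert y ({y}ᶜ : Set V) = Set.univ := by ext z; simp [em]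
  have h2 : G.neighborSet y ∩ {y}ᶜ = G.neighborSet y := by
    ext z
    simp only [Set.mem_inter_iff, SimpleGraph.mem_neighborSet, Set.mem_compl_iff,
      Set.mem_singleton_iff, and_iff_left_iff_imp]
    exact fun h => h.ne'
  rw [h1, G.edgesIn_univ, h2] at h
  exact h

/-- Contracting `xy` loses at most the edge `xy` and one edge for each common neighbour. -/
theorem SimpleGraph.ncard_edgeSet_contractEdge {V : Type*} [Finite V] (G : SimpleGraph V) {x y : V}
    (hxy : G.Adj x y) :
    G.edgeSet.ncard ≤ (G.contractEdge x y).edgeSet.ncard + 1 +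
      (G.neighborSet x ∩ G.neighborSet y).ncard := by
  have hne := hxy.ne
  set C := G ⊔ SimpleGraph.fromEdgeSet {e | ∃ b, G.Adj y b ∧ e = s(x, b)} with hC
  have hD : ({y}ᶜ : Set V) = insert x ({x, y}ᶜ : Set V) := by
    ext z
    simp only [Set.mem_compl_iff, Set.mem_singleton_iff, Set.mem_insert_iff]
    grind
  have e1 : (G.contractEdge x y).edgeSet.ncard = C.edgesIn {y}ᶜ := C.ncard_edgeSet_induce _
  have e2 := G.edgesIn_compl_singleton y
  generalize (G.contractEdge x y).edgeSet.ncard = c at e1 ⊢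
  rw [hD, SimpleGraph.edgesIn_insert _ (by simp)] at e1 e2
  have e3 : G.edgesIn {x, y}ᶜ ≤ C.edgesIn {x, y}ᶜ := SimpleGraph.edgesIn_mono le_sup_left subset_rfl
  have e4 : ((G.neighborSet x ∩ {x, y}ᶜ) ∪ (G.neighborSet y ∩ {x, y}ᶜ)).ncard ≤
      (C.neighborSet x ∩ {x, y}ᶜ).ncard := by
    refine Set.ncard_le_ncard ?_
    rintro z (⟨h, hz⟩ | ⟨h, hz⟩)
    · exact ⟨Or.inl h, hz⟩
    · refine ⟨Or.inr ?_, hz⟩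
      rw [SimpleGraph.fromEdgeSet_adj]
      exact ⟨⟨z, h, rfl⟩, fun h => hz (by simp [h])⟩
  have e5 := Set.ncard_union_add_ncard_inter (G.neighborSet x ∩ {x, y}ᶜ) (G.neighborSet y ∩ {x, y}ᶜ)
  have e6 : ((G.neighborSet x ∩ {x, y}ᶜ) ∩ (G.neighborSet y ∩ {x, y}ᶜ)).ncard ≤
      (G.neighborSet x ∩ G.neighborSet y).ncard :=
    Set.ncard_le_ncard fun z hz => ⟨hz.1.1, hz.2.1⟩
  have e7 : (G.neighborSet y).ncard ≤ (G.neighborSet y ∩ {x, y}ᶜ).ncard + 1 := by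
    refine (Set.ncard_le_ncard (t := insert x (G.neighborSet y ∩ {x, y}ᶜ)) ?_).trans
      (Set.ncard_insert_le _ _)
    intro z hz
    have : z ≠ y := (SimpleGraph.Adj.ne hz).symm
    by_cases h : z = x
    · exact Or.inl h
    · exact Or.inr ⟨hz, by simp [h, this]⟩
  omega

theorem SimpleGraph.sum_ncard_neighborSet {V : Type*} [Fintype V] (G : SimpleGraph V) :
    ∑ v, (G.neighborSet v).ncard = 2 * G.edgeSet.ncard := by
  classical
  have h := G.sum_degrees_eq_twice_card_edges
  rw [← SimpleGraph.coe_edgeFinset, Set.ncard_coe_finset, ← h]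
  refine Finset.sum_congr rfl fun v _ => ?_
  rw [← SimpleGraph.card_neighborFinset_eq_degree, ← Set.ncard_coe_finset,
    SimpleGraph.coe_neighborFinset]

theorem SimpleGraph.two_mul_ncard_edgeSet_le {V : Type*} [Finite V] (G : SimpleGraph V) :
    2 * (G.edgeSet.ncard : ℝ) ≤ Nat.card V * ((Nat.card V : ℝ) - 1) := by
  classical
  have := Fintype.ofFinite V
  have h : ∀ v ∈ Finset.univ, ((G.neighborSet v).ncard : ℝ) ≤ (Nat.card V : ℝ) - 1 := by
    intro v _
    have h1 : (insert v (G.neighborSet v)).ncard ≤ Nat.card V := Set.ncard_le_card _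
    rw [Set.ncard_insert_of_notMem (by simp)] at h1
    have : (((G.neighborSet v).ncard + 1 : ℕ) : ℝ) ≤ Nat.card V := by exact_mod_cast h1
    push_cast at this
    linarith
  have h2 := Finset.sum_le_card_nsmul _ _ _ h
  rw [← Nat.cast_sum, G.sum_ncard_neighborSet] at h2
  simpa [Nat.card_eq_fintype_card] using h2

/-- Some vertex has degree at most the average degree. -/
theorem SimpleGraph.exists_ncard_neighborSet_le {V : Type*} [Finite V] [Nonempty V]
    (G : SimpleGraph V) :
    ∃ v, ((G.neighborSet v).ncard : ℝ) * Nat.card V ≤ 2 * G.edgeSet.ncard := by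
  classical
  have := Fintype.ofFinite V
  obtain ⟨v, -, hv⟩ := Finset.exists_min_image Finset.univ (fun v => (G.neighborSet v).ncard)
    Finset.univ_nonempty
  refine ⟨v, ?_⟩
  have h := Finset.card_nsmul_le_sum _ _ _ hv
  rw [G.sum_ncard_neighborSet] at h
  rw [Nat.card_eq_fintype_card, mul_comm]
  exact_mod_cast (by simpa using h)

/-! ### Minors that are dense relative to a potential function -/

/-- A finite graph has an isomorphic copy on `Fin k`. -/
theorem SimpleGraph.exists_fin_isMinorOf {V : Type*} [Finite V] (G : SimpleGraph V) {k : ℕ}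
    (hk : Nat.card V = k) :
    ∃ M : SimpleGraph (Fin k), M.IsMinorOf G ∧ M.edgeSet.ncard = G.edgeSet.ncard := by
  let e := Finite.equivFinOfCardEq hk
  let I : G.comap e.symm ≃g G := SimpleGraph.Iso.comap e.symm G
  refine ⟨G.comap e.symm, ⟨fun v => {e.symm v},
    fun v => G.induce_star_connected _ (e.symm v) rfl (by simp),
    fun a b hab => by simpa [eq_comm] using hab, fun a b hab => ⟨_, rfl, _, rfl, hab⟩⟩, ?_⟩
  rw [← Nat.card_coe_set_eq, ← Nat.card_coe_set_eq]
  exact Nat.card_congr I.mapEdgeSet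

/-- Among the minors of `G` with at least `n₁` vertices and at least `φ(n)` edges, where `n` is the
number of vertices, take one with the fewest vertices. Unless it has exactly `n₁` vertices, deleting
any vertex and contracting any edge drops the number of edges below `φ(n - 1)`. -/
theorem SimpleGraph.exists_minimal_minor {V : Type*} [Finite V] (G : SimpleGraph V) (φ : ℕ → ℝ)
    (n₁ : ℕ) (hn : n₁ ≤ Nat.card V) (he : φ (Nat.card V) ≤ G.edgeSet.ncard) :
    ∃ (k : ℕ) (M : SimpleGraph (Fin k)), M.IsMinorOf G ∧ n₁ ≤ k ∧ φ k ≤ M.edgeSet.ncard ∧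
      (k = n₁ ∨
        (∀ v, (M.edgeSet.ncard : ℝ) - (M.neighborSet v).ncard < φ (k - 1)) ∧
        ∀ x y, M.Adj x y → (M.edgeSet.ncard : ℝ) - 1 -
          (M.neighborSet x ∩ M.neighborSet y).ncard < φ (k - 1)) := by
  classical
  let P : ℕ → Prop := fun k => n₁ ≤ k ∧ ∃ M : SimpleGraph (Fin k), M.IsMinorOf G ∧
    φ k ≤ M.edgeSet.ncard
  -- Any dense minor on an arbitrary finite vertex type can be moved to `Fin k`.
  have hP : ∃ k, P k := by
    obtain ⟨M, hM, hMe⟩ := G.exists_fin_isMinorOf rfl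
    exact ⟨_, hn, M, hM, by rwa [hMe]⟩
  obtain ⟨hk, M, hM, hMe⟩ := Nat.find_spec hP
  have hmin : ∀ m, m < Nat.find hP → ¬ P m := fun m hm => Nat.find_min hP hm
  refine ⟨Nat.find hP, M, hM, hk, hMe, ?_⟩
  generalize Nat.find hP = k at *
  rcases hk.eq_or_lt with h | h
  · exact Or.inl h.symm
  have hcard : ∀ y : Fin k, Nat.card ↥({y}ᶜ : Set (Fin k)) = k - 1 := by
    intro y
    have := Set.ncard_add_ncard_compl ({y} : Set (Fin k))
    rw [Set.ncard_singleton, Nat.card_fin] at this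
    rw [Nat.card_coe_set_eq]
    omega
  refine Or.inr ⟨fun v => ?_, fun x y hxy => ?_⟩
  · by_contra! hc
    refine hmin (k - 1) (by omega) ?_
    obtain ⟨M', hM', hMe'⟩ := (M.induce {v}ᶜ).exists_fin_isMinorOf (hcard v)
    refine ⟨by omega, M', hM'.trans ((M.isMinorOf_induce _).trans hM), ?_⟩
    · rw [hMe', SimpleGraph.ncard_edgeSet_induce]
      have := M.edgesIn_compl_singleton v
      rw [this] at hc
      push_cast at hc
      linarith
  · by_contra! hc
    refine hmin (k - 1) (by omega) ?_
    obtain ⟨M', hM', hMe'⟩ := (M.contractEdge x y).exists_fin_isMinorOf (hcard y)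
    refine ⟨by omega, M', hM'.trans ((M.isMinorOf_contractEdge hxy).trans hM), ?_⟩
    · rw [hMe']
      have := M.ncard_edgeSet_contractEdge hxy
      have : (M.edgeSet.ncard : ℝ) ≤ (M.contractEdge x y).edgeSet.ncard + 1 +
        (M.neighborSet x ∩ M.neighborSet y).ncard := by exact_mod_cast this
      linarith

/-- If every edge at `v` lies in many triangles, then the closed neighbourhood of `v` induces a
graph of large minimum degree. -/
theorem SimpleGraph.closedNbhd {V : Type*} [Finite V] (G : SimpleGraph V) (v : V) (K : ℝ)
    (hv : K < (G.neighborSet v).ncard)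
    (hK : ∀ u, G.Adj u v → K < (G.neighborSet u ∩ G.neighborSet v).ncard + 1) :
    let s := insert v (G.neighborSet v)
    Nat.card s = (G.neighborSet v).ncard + 1 ∧
    (∀ x, K < ((G.induce s).neighborSet x).ncard) ∧
    ((G.induce s).neighborSet ⟨v, Set.mem_insert _ _⟩).ncard = (G.neighborSet v).ncard := by
  intro s
  have hdeg : ∀ x : s, ((G.induce s).neighborSet x).ncard = (G.neighborSet x ∩ s).ncard := by
    intro x
    rw [← Set.ncard_image_of_injective _ Subtype.val_injective]
    congr 1
    ext z
    simp [and_comm]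
  have hdv : ((G.induce s).neighborSet ⟨v, Set.mem_insert _ _⟩).ncard =
      (G.neighborSet v).ncard := by
    rw [hdeg, Set.inter_eq_left.2 (Set.subset_insert _ _)]
  refine ⟨?_, ?_, hdv⟩
  · rw [Nat.card_coe_set_eq, Set.ncard_insert_of_notMem (by simp)]
  · rintro ⟨x, hx | hx⟩
    · subst hx
      rwa [hdv]
    · have hxv : G.Adj x v := SimpleGraph.Adj.symm hx
      refine (hK x hxv).trans_le ?_
      rw [hdeg]
      have : (insert v (G.neighborSet x ∩ G.neighborSet v)).ncard ≤
          (G.neighborSet x ∩ s).ncard := by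
        refine Set.ncard_le_ncard ?_
        rintro z (rfl | ⟨h1, h2⟩)
        · exact ⟨hxv, Set.mem_insert _ _⟩
        · exact ⟨h1, Set.mem_insert_of_mem _ h2⟩
      rw [Set.ncard_insert_of_notMem (by simp)] at this
      exact_mod_cast this

/-- The quadratic potential. It lies below the edge density guaranteed in the closed neighbourhood
of a vertex of a contraction-minimal graph (`pot_succ_le`), above `x(x-1)/2` for
`0.3K ≤ x ≤ 0.3K + 1` (`lt_two_mul_pot`), and `2(φ(k) - φ(k-1)) - 2φ(k)/k` is large for all `k > 0`
by the inequality of the means (`pot_gap`). -/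
noncomputable def pot (K x : ℝ) : ℝ := 0.08 * x ^ 2 + 0.375 * K * x - 0.07 * K ^ 2

theorem pot_succ_le {K m : ℝ} (hK : 3.4645 ≤ K) (h1 : K ≤ m) (h2 : m ≤ 2 * K) :
    2 * pot K (m + 1) ≤ m * (K + 1) := by
  unfold pot
  nlinarith [mul_nonneg (sub_nonneg.2 h1) (sub_nonneg.2 h2)]

theorem lt_two_mul_pot {K x : ℝ} (hK : 3.4645 ≤ K) (h1 : 0.3 * K ≤ x) (h2 : x ≤ 0.3 * K + 1) :
    x * (x - 1) < 2 * pot K x := by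
  unfold pot
  nlinarith [mul_nonneg (sub_nonneg.2 h1) (sub_nonneg.2 h2)]

theorem pot_gap {K k f m q : ℝ} (hK : 3.4645 * q ≤ K) (hk : 1 ≤ k) (hf : pot K k ≤ f)
    (hm : m * k ≤ 2 * f) (hK0 : 0 ≤ K) : m + q - 1 ≤ 2 * (f - pot K (k - 1)) := by
  have hkpos : (0 : ℝ) < k := by linarith
  refine le_of_mul_le_mul_right ?_ hkpos
  have h1 : 2 * pot K k * (k - 1) ≤ 2 * f * (k - 1) := by
    refine mul_le_mul_of_nonneg_right ?_ (by linarith)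
    linarith
  have h2 : q * k ≤ 0.16 * k ^ 2 + 0.14 * K ^ 2 := by
    have : q * k ≤ 0.289 * K * k := by
      refine mul_le_mul_of_nonneg_right ?_ hkpos.le
      linarith
    nlinarith [sq_nonneg (0.4 * k - 0.37 * K)]
  unfold pot at *
  nlinarith

/-- The dense minor. If `G` has at least `κn` edges, `κ = 3.4645q`, then it has a minor of order `n'`
and minimum degree `δ` with `2δ + 1 ≥ n' + q`. -/
theorem SimpleGraph.exists_dense_minor {V : Type*} [Finite V] [Nonempty V] (G : SimpleGraph V)
    (q : ℕ) (hq : 1 ≤ q) (he : 3.4645 * (q : ℝ) * Nat.card V ≤ G.edgeSet.ncard) :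
    ∃ (k : ℕ) (M : SimpleGraph (Fin k)) (s : Set (Fin k)), s.Nonempty ∧
      (M.induce s).IsMinorOf G ∧
      ∀ x : s, Nat.card s + q ≤ 2 * ((M.induce s).neighborSet x).ncard + 1 := by
  have hq' : (1 : ℝ) ≤ q := by exact_mod_cast hq
  set κ : ℝ := 3.4645 * q with hκ
  obtain ⟨n, M, hMG, hn1, hMe, hM⟩ := G.exists_minimal_minor (fun n => κ * n) 1
    (Nat.card_pos) he
  have hn1' : (1 : ℝ) ≤ n := by exact_mod_cast hn1
  have hMb := M.two_mul_ncard_edgeSet_le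
  rw [Nat.card_fin] at hMb
  rcases hM with hM | ⟨hMv, hMc⟩
  · exfalso
    subst hM
    norm_num at hMb hMe
    linarith
  rw [Nat.cast_sub hn1, Nat.cast_one] at hMv hMc
  have : Nonempty (Fin n) := ⟨⟨0, hn1⟩⟩
  -- `e = K + κ(n - 1)`, so that `K ≥ κ` bounds degrees and numbers of triangles.
  set e : ℝ := (M.edgeSet.ncard : ℝ) with he_def
  obtain ⟨K, hK⟩ : ∃ K, K = e - κ * (n - 1) := ⟨_, rfl⟩
  have hKκ : κ ≤ K := by rw [hK]; linarith
  obtain ⟨v, hv⟩ := M.exists_ncard_neighborSet_le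
  rw [Nat.card_fin, ← he_def] at hv
  have hmK : ((M.neighborSet v).ncard : ℝ) ≤ 2 * K := by
    have : e ≤ K * n := by rw [hK]; nlinarith
    have : ((M.neighborSet v).ncard : ℝ) * n ≤ 2 * K * n := by linarith
    exact le_of_mul_le_mul_right this (by linarith)
  have hKv : K < (M.neighborSet v).ncard := by have := hMv v; linarith
  obtain ⟨hs1, hs2, hs3⟩ := M.closedNbhd v K hKv
    (fun u hu => by have := hMc u v hu; linarith)
  set s := insert v (M.neighborSet v)
  set m : ℝ := ((M.neighborSet v).ncard : ℝ) with hm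
  -- the number of edges in the closed neighbourhood
  have hcount : m * (K + 1) ≤ 2 * ((M.induce s).edgeSet.ncard : ℝ) := by
    classical
    have : Fintype s := Fintype.ofFinite _
    have h := (M.induce s).sum_ncard_neighborSet
    rw [← Finset.add_sum_erase _ _ (Finset.mem_univ ⟨v, Set.mem_insert _ _⟩), hs3] at h
    have h2 := Finset.card_nsmul_le_sum (Finset.univ.erase (⟨v, Set.mem_insert _ _⟩ : s))
      (fun x => (((M.induce s).neighborSet x).ncard : ℝ)) K (fun x _ => (hs2 x).le)
    rw [Finset.card_erase_of_mem (Finset.mem_univ _), Finset.card_univ,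
      ← Nat.card_eq_fintype_card, hs1, Nat.add_sub_cancel, ← Nat.cast_sum, nsmul_eq_mul,
      ← hm] at h2
    have h3 : m + ((∑ x ∈ Finset.univ.erase (⟨v, Set.mem_insert _ _⟩ : s),
      ((M.induce s).neighborSet x).ncard : ℕ) : ℝ) = 2 * ((M.induce s).edgeSet.ncard : ℝ) := by
      rw [hm]
      exact_mod_cast h
    linarith
  have hK3 : 3.4645 * (q : ℝ) ≤ K := hKκ
  have hcs : (Nat.card s : ℝ) = m + 1 := by rw [hs1]; push_cast; rfl
  obtain ⟨k, N, hNM, hk1, hNe, hN⟩ := (M.induce s).exists_minimal_minor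
    (fun n => pot K n) ⌈0.3 * K⌉₊
    (by
      rw [Nat.ceil_le, hcs]; linarith)
    (by
      simp only [hcs]
      linarith [pot_succ_le (by linarith) hKv.le hmK])
  have hk1' := Nat.ceil_le.1 hk1
  have hk0 : 1 ≤ k := by
    have : (0 : ℝ) < k := by linarith
    exact_mod_cast this
  have hk0' : (1 : ℝ) ≤ k := by exact_mod_cast hk0
  have hNb := N.two_mul_ncard_edgeSet_le
  rw [Nat.card_fin] at hNb
  rcases hN with hN | ⟨hNv, hNc⟩
  · exfalso
    have : (k : ℝ) < 0.3 * K + 1 := by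
      rw [hN]
      exact Nat.ceil_lt_add_one (by linarith)
    linarith [lt_two_mul_pot (by linarith) hk1' this.le]
  rw [Nat.cast_sub hk0, Nat.cast_one] at hNv hNc
  have : Nonempty (Fin k) := ⟨⟨0, hk0⟩⟩
  set f : ℝ := (N.edgeSet.ncard : ℝ) with hf_def
  obtain ⟨L, hL⟩ : ∃ L, L = f - pot K (k - 1) :=
    ⟨_, rfl⟩
  obtain ⟨w, hw⟩ := N.exists_ncard_neighborSet_le
  rw [Nat.card_fin, ← hf_def] at hw
  have hLw : L < (N.neighborSet w).ncard := by have := hNv w; linarith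
  obtain ⟨ht1, ht2, -⟩ := N.closedNbhd w L hLw
    (fun u hu => by have := hNc u w hu; linarith)
  refine ⟨k, N, insert w (N.neighborSet w), ⟨w, Set.mem_insert _ _⟩,
    (N.isMinorOf_induce _).trans (hNM.trans ((M.isMinorOf_induce _).trans hMG)), fun x => ?_⟩
  rw [ht1]
  have hx := ht2 x
  generalize ((N.induce (insert w (N.neighborSet w))).neighborSet x).ncard = d at hx
  have key : ((N.neighborSet w).ncard : ℝ) + q - 1 ≤ 2 * L := by
    rw [hL]
    exact pot_gap hK3 hk0' hNe hw (by linarith)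
  have : ((N.neighborSet w).ncard + q : ℝ) < 2 * d + 1 := by linarith
  have : (N.neighborSet w).ncard + q < 2 * d + 1 := by exact_mod_cast this
  omega

/-! ### Greedy embedding into a dense graph -/

section Greedy

variable {W α : Type*}

/-- `M` is dense with parameter `q`: twice the minimum degree plus one is at least the order
plus `q`. -/
def SimpleGraph.DenseFor (M : SimpleGraph α) (q : ℕ) : Prop :=
  ∀ x, Nat.card α + q ≤ 2 * (M.neighborSet x).ncard + 1

theorem SimpleGraph.DenseFor.le_ncard [Finite α] {M : SimpleGraph α} {q : ℕ} (hM : M.DenseFor q)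
    (x : α) : q ≤ (M.neighborSet x).ncard ∧ q + 1 ≤ Nat.card α := by
  have h1 : (insert x (M.neighborSet x)).ncard ≤ Nat.card α := Set.ncard_le_card _
  rw [Set.ncard_insert_of_notMem (by simp)] at h1
  have := hM x
  omega

theorem SimpleGraph.DenseFor.exists_notMem [Finite α] [Nonempty α] {M : SimpleGraph α} {q : ℕ}
    (hM : M.DenseFor q) {U : Set α} (hU : U.ncard ≤ q) : ∃ z, z ∉ U := by
  by_contra! h
  have : U = Set.univ := Set.eq_univ_of_forall h
  rw [this, Set.ncard_univ] at hU
  obtain ⟨x⟩ := ‹Nonempty α›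
  have := hM.le_ncard x
  omega

theorem SimpleGraph.DenseFor.exists_adj [Finite α] {M : SimpleGraph α} {q : ℕ}
    (hM : M.DenseFor q) {U : Set α} (hU : U.ncard ≤ q) {x : α} (hx : x ∈ U) :
    ∃ z, z ∉ U ∧ M.Adj z x := by
  by_contra! h
  have h1 : M.neighborSet x ⊆ U \ {x} := fun z hz =>
    ⟨by_contra fun hzU => h z hzU (SimpleGraph.Adj.symm hz), (SimpleGraph.Adj.ne hz).symm⟩
  have h2 := Set.ncard_le_ncard h1
  have h3 := Set.ncard_sdiff_singleton_lt_of_mem hx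
  have := hM.le_ncard x
  omega

/-- Two vertices have at least `q - 1` common neighbours, and `x ∈ U` is not one of them. -/
theorem SimpleGraph.DenseFor.exists_common [Finite α] {M : SimpleGraph α} {q : ℕ}
    (hM : M.DenseFor q) {U : Set α} (hU : U.ncard + 1 ≤ q) {x : α} (hx : x ∈ U) (y : α) :
    ∃ z, z ∉ U ∧ M.Adj z x ∧ M.Adj z y := by
  by_contra! h
  have h1 : M.neighborSet x ∩ M.neighborSet y ⊆ U \ {x} := fun z hz =>
    ⟨by_contra fun hzU => h z hzU (SimpleGraph.Adj.symm hz.1) (SimpleGraph.Adj.symm hz.2),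
      (SimpleGraph.Adj.ne hz.1).symm⟩
  have h2 := Set.ncard_le_ncard h1
  have h3 := Set.ncard_sdiff_singleton_lt_of_mem hx
  have h4 := Set.ncard_union_add_ncard_inter (M.neighborSet x) (M.neighborSet y)
  have h5 : (M.neighborSet x ∪ M.neighborSet y).ncard ≤ Nat.card α := Set.ncard_le_card _
  have := hM x
  have := hM y
  omega

/-- A partial minor model in `M` whose branch sets `B w`, `w ∈ S`, are stars (possibly with further
edges) centred at `f w`, realizing the adjacencies in the relation `r`. -/
structure StarModel (M : SimpleGraph α) (S : Set W) (r : W → W → Prop) (f : W → α)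
    (B : W → Set α) : Prop where
  mem : ∀ w ∈ S, f w ∈ B w
  star : ∀ w ∈ S, ∀ x ∈ B w, x = f w ∨ M.Adj (f w) x
  disj : ∀ a ∈ S, ∀ b ∈ S, a ≠ b → Disjoint (B a) (B b)
  adj : ∀ a ∈ S, ∀ b ∈ S, r a b → ∃ x ∈ B a, ∃ y ∈ B b, M.Adj x y

/-- There is a partial star model that uses at most `u` vertices. -/
def HasStarModel (M : SimpleGraph α) (S : Set W) (r : W → W → Prop) (u : ℕ) : Prop :=
  ∃ f B, StarModel M S r f B ∧ (⋃ w ∈ S, B w).ncard ≤ u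

/-- Adjacency of `H` inside `S`, together with the pairs `(w, v)`, `v ∈ R`. -/
def extRel (H : SimpleGraph W) (S : Set W) (w : W) (R : Set W) (a b : W) : Prop :=
  (a ∈ S ∧ b ∈ S ∧ H.Adj a b) ∨ (a = w ∧ b ∈ R)

theorem HasStarModel.mono {M : SimpleGraph α} {S : Set W} {r : W → W → Prop} {u u' : ℕ}
    (h : HasStarModel M S r u) (hu : u ≤ u') : HasStarModel M S r u' := by
  obtain ⟨f, B, h1, h2⟩ := h
  exact ⟨f, B, h1, h2.trans hu⟩

/-- A new vertex `w` gets the branch set `{z}`. -/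
theorem StarModel.place [Finite α] {M : SimpleGraph α} {H : SimpleGraph W} {S : Set W}
    {f : W → α} {B : W → Set α} (h : StarModel M S H.Adj f B) {w : W} (hw : w ∉ S) {z : α}
    (hz : z ∉ ⋃ w ∈ S, B w) {R : Set W} (hRS : R ⊆ S) (hR : ∀ v ∈ R, ∃ x ∈ B v, M.Adj z x) :
    HasStarModel M (insert w S) (extRel H S w R) ((⋃ w ∈ S, B w).ncard + 1) := by
  classical
  have hne : ∀ v ∈ S, v ≠ w := fun v hv h => hw (h ▸ hv)
  have hBS : ∀ v ∈ S, Function.update B w {z} v = B v := fun v hv =>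
    Function.update_of_ne (hne v hv) _ _
  have hfS : ∀ v ∈ S, Function.update f w z v = f v := fun v hv =>
    Function.update_of_ne (hne v hv) _ _
  have hBw : Function.update B w {z} w = {z} := Function.update_self ..
  have hfw : Function.update f w z w = z := Function.update_self ..
  have hzB : ∀ v ∈ S, z ∉ B v := fun v hv hzv => hz (Set.mem_biUnion hv hzv)
  refine ⟨Function.update f w z, Function.update B w {z}, ⟨?_, ?_, ?_, ?_⟩, ?_⟩
  · rintro v (rfl | hv)
    · rw [hBw, hfw]; rfl
    · rw [hBS v hv, hfS v hv]; exact h.mem v hv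
  · rintro v (rfl | hv)
    · rw [hBw, hfw]; exact fun x hx => Or.inl hx
    · rw [hBS v hv, hfS v hv]; exact h.star v hv
  · rintro a (rfl | ha) b (rfl | hb) hab
    · exact absurd rfl hab
    · rw [hBw, hBS b hb]; exact Set.disjoint_singleton_left.2 (hzB b hb)
    · rw [hBw, hBS a ha]; exact Set.disjoint_singleton_right.2 (hzB a ha)
    · rw [hBS b hb, hBS a ha]; exact h.disj a ha b hb hab
  · rintro a - b - (⟨ha, hb, hab⟩ | ⟨rfl, hb⟩)
    · rw [hBS b hb, hBS a ha]; exact h.adj a ha b hb hab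
    · rw [hBw, hBS b (hRS hb)]
      exact ⟨z, rfl, hR b hb⟩
  · rw [Set.biUnion_insert, hBw, Set.iUnion₂_congr hBS, Set.singleton_union]
    exact Set.ncard_insert_le _ _

/-- One further vertex added to the branch set of `w` makes it adjacent to that of `v`. -/
theorem HasStarModel.attach [Finite α] {M : SimpleGraph α} {H : SimpleGraph W} {S : Set W} {q : ℕ}
    (hM : M.DenseFor q) {w v : W} (hw : w ∉ S) (hv : v ∈ S) {R : Set W} {u : ℕ}
    (h : HasStarModel M (insert w S) (extRel H S w R) u) (hu : u + 1 ≤ q) :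
    HasStarModel M (insert w S) (extRel H S w (insert v R)) (u + 1) := by
  classical
  obtain ⟨f, B, h, hU⟩ := h
  obtain ⟨z, hz, hzw, hzv⟩ := hM.exists_common (U := ⋃ w' ∈ insert w S, B w') (by omega)
    (Set.mem_biUnion (Or.inl rfl) (h.mem w (Or.inl rfl))) (f v)
  have hzB : ∀ v ∈ insert w S, z ∉ B v := fun v hv hzv => hz (Set.mem_biUnion hv hzv)
  have hBw : Function.update B w (insert z (B w)) w = insert z (B w) := Function.update_self ..
  have hBS : ∀ v ∈ S, Function.update B w (insert z (B w)) v = B v := fun v hv =>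
    Function.update_of_ne (ne_of_mem_of_not_mem hv hw) _ _
  have hle : ∀ a, B a ⊆ Function.update B w (insert z (B w)) a := by
    intro a
    by_cases ha : a = w
    · subst ha; rw [hBw]; exact Set.subset_insert _ _
    · rw [Function.update_of_ne ha]
  refine ⟨f, Function.update B w (insert z (B w)), ⟨fun a ha => hle a (h.mem a ha), ?_, ?_, ?_⟩, ?_⟩
  · rintro a (rfl | ha)
    · rw [hBw]
      rintro x (rfl | hx)
      · exact Or.inr hzw.symm
      · exact h.star a (Or.inl rfl) x hx
    · rw [hBS a ha]; exact h.star a (Or.inr ha)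
  · rintro a (rfl | ha) b (rfl | hb) hab
    · exact absurd rfl hab
    · rw [hBw, hBS b hb]
      exact Set.disjoint_insert_left.2 ⟨hzB b (Or.inr hb), h.disj a (Or.inl rfl) b (Or.inr hb) hab⟩
    · rw [hBw, hBS a ha]
      exact Set.disjoint_insert_right.2 ⟨hzB a (Or.inr ha), h.disj a (Or.inr ha) b (Or.inl rfl) hab⟩
    · rw [hBS b hb, hBS a ha]; exact h.disj a (Or.inr ha) b (Or.inr hb) hab
  · have hold : ∀ a ∈ insert w S, ∀ b ∈ insert w S, extRel H S w R a b →
        ∃ x ∈ Function.update B w (insert z (B w)) a,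
          ∃ y ∈ Function.update B w (insert z (B w)) b, M.Adj x y := by
      intro a ha b hb hab
      obtain ⟨x, hx, y, hy, hxy⟩ := h.adj a ha b hb hab
      exact ⟨x, hle a hx, y, hle b hy, hxy⟩
    rintro a ha b hb (hab | ⟨rfl, rfl | hbR⟩)
    · exact hold a ha b hb (Or.inl hab)
    · exact ⟨z, by rw [hBw]; exact Set.mem_insert _ _, f b, hle b (h.mem b hb), hzv⟩
    · exact hold a ha b hb (Or.inr ⟨rfl, hbR⟩)
  · rw [Set.biUnion_insert, hBw, Set.iUnion₂_congr hBS, Set.insert_union, ← Set.biUnion_insert]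
    exact (Set.ncard_insert_le _ _).trans (by omega)

theorem HasStarModel.attach_finset [Finite α] {M : SimpleGraph α} {H : SimpleGraph W} {S : Set W}
    {q : ℕ} (hM : M.DenseFor q) {w : W} (hw : w ∉ S) {R : Set W} {u : ℕ}
    (h : HasStarModel M (insert w S) (extRel H S w R) u) (F : Finset W) (hF : ↑F ⊆ S)
    (hu : u + F.card ≤ q) :
    HasStarModel M (insert w S) (extRel H S w (R ∪ ↑F)) (u + F.card) := by
  classical
  induction F using Finset.induction_on with
  | empty => simpa using h
  | insert a F ha ih =>
    rw [Finset.card_insert_of_notMem ha] at hu ⊢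
    rw [Finset.coe_insert] at hF ⊢
    rw [Set.union_insert]
    exact (ih ((Set.subset_insert _ _).trans hF) (by omega)).attach hM hw (hF (Or.inl rfl))
      (by omega)

theorem HasStarModel.of_extRel {M : SimpleGraph α} {H : SimpleGraph W} {S : Set W} {w : W}
    (hw : w ∉ S) {u : ℕ}
    (h : HasStarModel M (insert w S) (extRel H S w (H.neighborSet w ∩ S)) u) :
    HasStarModel M (insert w S) H.Adj u := by
  obtain ⟨f, B, h, hU⟩ := h
  refine ⟨f, B, ⟨h.mem, h.star, h.disj, ?_⟩, hU⟩
  rintro a (rfl | ha) b (rfl | hb) hab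
  · exact absurd hab (H.irrefl)
  · exact h.adj a (Or.inl rfl) b (Or.inr hb) (Or.inr ⟨rfl, hab, hb⟩)
  · obtain ⟨x, hx, y, hy, hxy⟩ := h.adj b (Or.inl rfl) a (Or.inr ha) (Or.inr ⟨rfl, hab.symm, ha⟩)
    exact ⟨y, hy, x, hx, hxy.symm⟩
  · exact h.adj a (Or.inr ha) b (Or.inr hb) (Or.inl ⟨ha, hb, hab⟩)

/-- A vertex with at most one earlier neighbour costs one vertex of `M`. -/
theorem HasStarModel.extend_one [Finite W] [Finite α] [Nonempty α] {M : SimpleGraph α}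
    {H : SimpleGraph W} {S : Set W} {q u : ℕ} (hM : M.DenseFor q) (h : HasStarModel M S H.Adj u)
    {w : W} (hw : w ∉ S) (hb : (H.neighborSet w ∩ S).ncard ≤ 1) (hu : u ≤ q) :
    HasStarModel M (insert w S) H.Adj (u + 1) := by
  obtain ⟨f, B, h, hU⟩ := h
  refine HasStarModel.of_extRel hw ?_
  suffices ∃ z, z ∉ (⋃ w ∈ S, B w) ∧ ∀ v ∈ H.neighborSet w ∩ S, ∃ x ∈ B v, M.Adj z x by
    obtain ⟨z, hz, hR⟩ := this
    exact (h.place hw hz Set.inter_subset_right hR).mono (by omega)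
  have : Nonempty W := ⟨w⟩
  obtain ⟨v, hv⟩ := (Set.ncard_le_one_iff_subset_singleton (s := H.neighborSet w ∩ S)).1 hb
  by_cases hvS : v ∈ S
  · obtain ⟨z, hz, hzv⟩ := hM.exists_adj (hU.trans hu) (Set.mem_biUnion hvS (h.mem v hvS))
    refine ⟨z, hz, fun v' hv' => ?_⟩
    obtain rfl : v' = v := hv hv'
    exact ⟨_, h.mem _ hvS, hzv⟩
  · obtain ⟨z, hz⟩ := hM.exists_notMem (hU.trans hu)
    refine ⟨z, hz, fun v' hv' => ?_⟩
    obtain rfl : v' = v := hv hv'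
    exact absurd hv'.2 hvS

/-- A vertex with `b ≥ 2` earlier neighbours costs `b - 1` vertices of `M`: the first two neighbours
are served by a common neighbour of the centres. -/
theorem HasStarModel.extend_many [Finite W] [Finite α] {M : SimpleGraph α}
    {H : SimpleGraph W} {S : Set W} {q u : ℕ} (hM : M.DenseFor q) (h : HasStarModel M S H.Adj u)
    {w : W} (hw : w ∉ S) (hb : 2 ≤ (H.neighborSet w ∩ S).ncard)
    (hu : u + (H.neighborSet w ∩ S).ncard ≤ q + 1) :
    HasStarModel M (insert w S) H.Adj (u + (H.neighborSet w ∩ S).ncard - 1) := by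
  classical
  obtain ⟨f, B, h, hU⟩ := h
  refine HasStarModel.of_extRel hw ?_
  obtain ⟨v₁, hv₁, v₂, hv₂, hne⟩ := (Set.one_lt_ncard (s := H.neighborSet w ∩ S)).1 hb
  obtain ⟨z, hz, hz1, hz2⟩ := hM.exists_common (by omega)
    (Set.mem_biUnion hv₁.2 (h.mem v₁ hv₁.2)) (f v₂)
  have hp := h.place hw hz (R := {v₁, v₂}) (by rintro v (rfl | rfl); exacts [hv₁.2, hv₂.2])
    (by rintro v (rfl | rfl); exacts [⟨_, h.mem _ hv₁.2, hz1⟩, ⟨_, h.mem _ hv₂.2, hz2⟩])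
  have hfin : (H.neighborSet w ∩ S).Finite := Set.toFinite _
  have hsub : ({v₁, v₂} : Set W) ⊆ H.neighborSet w ∩ S := by
    rintro v (rfl | rfl) <;> assumption
  obtain ⟨F, hF⟩ := ((H.neighborSet w ∩ S) \ {v₁, v₂}).toFinite.exists_finset_coe
  have hFc : F.card + 2 = (H.neighborSet w ∩ S).ncard := by
    rw [← Set.ncard_coe_finset, hF, ← Set.ncard_pair hne]
    exact Set.ncard_sdiff_add_ncard_of_subset hsub
  have := hp.attach_finset hM hw F (by rw [hF]; exact fun x hx => hx.1.2) (by omega)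
  rw [hF, Set.union_sdiff_cancel hsub] at this
  exact this.mono (by omega)

/-- `T` is the vertex set of a subtree of `H` that is an induced subgraph of `H`: it arises from
a single vertex by adding vertices with exactly one earlier neighbour. -/
inductive GrownTree (H : SimpleGraph W) : Set W → Prop
  | single (w : W) : GrownTree H {w}
  | grow (T : Set W) (w v : W) : GrownTree H T → w ∉ T → v ∈ T → H.Adj w v →
      (∀ x ∈ T, H.Adj w x → x = v) → GrownTree H (insert w T)

/-- The order in which the vertices of `H` are embedded. At most `e(S)` vertices are used for `S`,
except that one more may be used while a tree `T` is being grown; the component containing `T` is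
not a tree, so that the excess disappears with its first cycle. -/
theorem HasStarModel.greedy [Finite W] [Finite α] [Nonempty α] {M : SimpleGraph α}
    {H : SimpleGraph W} (hM : M.DenseFor H.edgeSet.ncard)
    (hno : ∀ T, GrownTree H T → ∃ a ∈ T, ∃ b, b ∉ T ∧ H.Adj a b) (n : ℕ) :
    ∀ S : Set W, (Sᶜ).ncard ≤ n →
      (HasStarModel M S H.Adj (H.edgesIn S) ∨
        ∃ S' T, S = S' ∪ T ∧ Disjoint S' T ∧ (∀ a ∈ S', ∀ b, H.Adj a b → b ∈ S') ∧ GrownTree H T ∧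
          HasStarModel M S H.Adj (H.edgesIn S + 1)) →
      ∃ u, HasStarModel M Set.univ H.Adj u := by
  have hle : ∀ S, H.edgesIn S ≤ H.edgeSet.ncard := fun S => by
    rw [← H.edgesIn_univ]; exact SimpleGraph.edgesIn_mono le_rfl (Set.subset_univ _)
  induction n with
  | zero =>
    intro S hS h
    have : S = Set.univ := by
      rw [← Set.compl_empty_iff, ← Set.ncard_eq_zero]; omega
    subst this
    rcases h with h | ⟨-, -, -, -, -, -, h⟩ <;> exact ⟨_, h⟩
  | succ n ih =>
    intro S hS h
    by_cases hSu : S = Set.univ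
    · subst hSu
      rcases h with h | ⟨-, -, -, -, -, -, h⟩ <;> exact ⟨_, h⟩
    have hcompl : ∀ w ∉ S, ((insert w S)ᶜ).ncard ≤ n := by
      intro w hw
      have h1 := Set.ncard_add_ncard_compl S
      have h2 := Set.ncard_add_ncard_compl (insert w S)
      rw [Set.ncard_insert_of_notMem hw] at h2
      omega
    rcases h with h | ⟨S', T, rfl, hd, hS', hT, h⟩
    · by_cases hc : ∃ a ∈ S, ∃ b, b ∉ S ∧ H.Adj a b
      · obtain ⟨a, ha, w, hw, haw⟩ := hc
        have he := H.edgesIn_insert hw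
        have hle' := hle (insert w S)
        have hpos : 0 < (H.neighborSet w ∩ S).ncard :=
          (Set.ncard_pos).2 ⟨a, haw.symm, ha⟩
        refine ih _ (hcompl w hw) (Or.inl ?_)
        by_cases hb : (H.neighborSet w ∩ S).ncard ≤ 1
        · exact (h.extend_one hM hw hb (hle S)).mono (by omega)
        · exact (h.extend_many hM hw (by omega) (by omega)).mono (by omega)
      · push Not at hc
        obtain ⟨w, hw⟩ := (Set.ne_univ_iff_exists_notMem S).1 hSu
        have hempty : H.neighborSet w ∩ S = ∅ := by
          ext x
          simp only [Set.mem_inter_iff, SimpleGraph.mem_neighborSet, Set.mem_empty_iff_false,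
            iff_false, not_and]
          exact fun hwx hx => hc x hx w hw hwx.symm
        have he := H.edgesIn_insert hw
        rw [hempty, Set.ncard_empty] at he
        refine ih _ (hcompl w hw) (Or.inr ⟨S, {w}, ?_, ?_, ?_, GrownTree.single w, ?_⟩)
        · rw [Set.union_singleton]
        · exact Set.disjoint_singleton_right.2 hw
        · exact fun a ha b hab => by_contra fun hb => hc a ha b hb hab
        · rw [he]
          exact h.extend_one hM hw (by rw [hempty]; simp) (hle S)
    · obtain ⟨a, ha, w, hwT, haw⟩ := hno T hT
      have hwS' : w ∉ S' := fun hw => Set.disjoint_left.1 hd (hS' w hw a haw.symm) ha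
      have hw : w ∉ S' ∪ T := by rintro (h | h); exacts [hwS' h, hwT h]
      have he := H.edgesIn_insert hw
      have hle' := hle (insert w (S' ∪ T))
      have hpos : 0 < (H.neighborSet w ∩ (S' ∪ T)).ncard :=
        (Set.ncard_pos).2 ⟨a, haw.symm, Or.inr ha⟩
      by_cases hb : (H.neighborSet w ∩ (S' ∪ T)).ncard ≤ 1
      · refine ih _ (hcompl w hw) (Or.inr ⟨S', insert w T, ?_, ?_, hS', ?_, ?_⟩)
        · rw [Set.union_insert]
        · exact Set.disjoint_insert_right.2 ⟨hwS', hd⟩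
        · exact GrownTree.grow T w a hT hwT ha haw.symm fun x hx hwx =>
            (Set.ncard_le_one).1 hb x ⟨hwx, Or.inr hx⟩ a ⟨haw.symm, Or.inr ha⟩
        · exact (h.extend_one hM hw hb (by omega)).mono (by omega)
      · refine ih _ (hcompl w hw) (Or.inl ?_)
        exact (h.extend_many hM hw (by omega) (by omega)).mono (by omega)

/-- A graph without tree components is a minor of every graph that is dense with respect to its
number of edges. -/
theorem isMinorOf_of_denseFor [Finite W] [Finite α] [Nonempty α] {M : SimpleGraph α}
    {H : SimpleGraph W} (hM : M.DenseFor H.edgeSet.ncard)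
    (hno : ∀ T, GrownTree H T → ∃ a ∈ T, ∃ b, b ∉ T ∧ H.Adj a b) : H.IsMinorOf M := by
  have h0 : HasStarModel M (∅ : Set W) H.Adj (H.edgesIn ∅) :=
    ⟨fun _ => Classical.arbitrary α, fun _ => ∅, by constructor <;> simp, by simp⟩
  obtain ⟨u, f, B, h, -⟩ := HasStarModel.greedy hM hno _ ∅ le_rfl (Or.inl h0)
  exact ⟨B, fun w => M.induce_star_connected _ (f w) (h.mem w trivial) (h.star w trivial),
    fun a b hab => h.disj a trivial b trivial hab, fun a b hab => h.adj a trivial b trivial hab⟩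

end Greedy

/-! ### Splitting off tree components -/

theorem GrownTree.nonempty {W : Type*} {H : SimpleGraph W} {T : Set W} (h : GrownTree H T) :
    T.Nonempty := by
  cases h with
  | single w => exact Set.singleton_nonempty w
  | grow T w v _ _ _ _ _ => exact Set.insert_nonempty w T

theorem GrownTree.ncard_le {W : Type*} [Finite W] {H : SimpleGraph W} {T : Set W}
    (h : GrownTree H T) : T.ncard ≤ H.edgesIn T + 1 := by
  induction h with
  | single w => simp
  | grow T w v _ hw hv hwv _ ih =>
    rw [Set.ncard_insert_of_notMem hw, H.edgesIn_insert hw]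
    have : 0 < (H.neighborSet w ∩ T).ncard := (Set.ncard_pos).2 ⟨v, hwv, hv⟩
    omega

/-- A graph with at least `cn` edges has a nonempty subgraph of minimum degree at least `c`: delete
vertices of degree less than `c` one by one. -/
theorem SimpleGraph.exists_minDegree {V : Type*} [Finite V] (G : SimpleGraph V) (c : ℝ) (n : ℕ) :
    ∀ U : Set V, U.ncard ≤ n → U.Nonempty → c * U.ncard ≤ G.edgesIn U →
      ∃ U' : Set V, U'.Nonempty ∧ ∀ x ∈ U', c ≤ (G.neighborSet x ∩ U').ncard := by
  induction n with
  | zero =>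
    intro U h1 h2
    have := (Set.ncard_pos).2 h2
    omega
  | succ n ih =>
    intro U h1 h2 h3
    by_cases hU : ∀ x ∈ U, c ≤ (G.neighborSet x ∩ U).ncard
    · exact ⟨U, h2, hU⟩
    push Not at hU
    obtain ⟨x, hx, hc⟩ := hU
    have hins : insert x (U \ {x}) = U := Set.insert_sdiff_self_of_mem hx
    have hnot : x ∉ U \ {x} := fun h => h.2 rfl
    have hcard := Set.ncard_insert_of_notMem hnot
    have he := G.edgesIn_insert hnot
    have hN : G.neighborSet x ∩ (U \ {x}) = G.neighborSet x ∩ U := by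
      ext z
      simp only [Set.mem_inter_iff, SimpleGraph.mem_neighborSet, Set.mem_sdiff,
        Set.mem_singleton_iff]
      have := @SimpleGraph.Adj.ne _ G x z
      grind
    rw [hins] at hcard he
    rw [hN] at he
    rw [he, hcard] at h3
    push_cast at h3
    have h4 : c * ((U \ {x}).ncard : ℝ) ≤ G.edgesIn (U \ {x}) := by linarith
    rcases (U \ {x}).eq_empty_or_nonempty with h | h
    · -- `U = {x}` carries no edge, which forces `c ≤ 0`.
      rw [h, G.edgesIn_empty] at h3
      simp only [Set.ncard_empty, Nat.cast_zero, zero_add, mul_one] at h3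
      linarith
    · exact ih _ (by omega) h h4

/-- A tree can be embedded greedily into a graph of minimum degree at least `|T| - 1`. -/
theorem GrownTree.exists_embedding {W V : Type*} [Finite W] [Finite V] {H : SimpleGraph W}
    {G : SimpleGraph V} {T : Set W} (h : GrownTree H T) {U : Set V} (hU : U.Nonempty) (k : ℕ)
    (hk : ∀ x ∈ U, k ≤ (G.neighborSet x ∩ U).ncard + 1) (hT : T.ncard ≤ k) :
    ∃ f : W → V, Set.InjOn f T ∧ Set.MapsTo f T U ∧
      ∀ a ∈ T, ∀ b ∈ T, H.Adj a b → G.Adj (f a) (f b) := by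
  classical
  induction h with
  | single w =>
    obtain ⟨x, hx⟩ := hU
    refine ⟨fun _ => x, by simp, fun _ _ => hx, ?_⟩
    rintro a rfl b rfl hab
    exact absurd hab H.irrefl
  | grow T w v _ hw hv hwv huniq ih =>
    rw [Set.ncard_insert_of_notMem hw] at hT
    obtain ⟨f, hinj, hmaps, hadj⟩ := ih (by omega)
    obtain ⟨z, hzN, hzT⟩ : ∃ z ∈ G.neighborSet (f v) ∩ U, z ∉ f '' T := by
      by_contra! hc
      have h1 : G.neighborSet (f v) ∩ U ⊆ f '' T \ {f v} := fun z hz =>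
        ⟨hc z hz, (SimpleGraph.Adj.ne hz.1).symm⟩
      have h2 := Set.ncard_le_ncard h1
      have h3 := Set.ncard_sdiff_singleton_lt_of_mem (Set.mem_image_of_mem f hv)
      have h4 := Set.ncard_image_le (f := f) (Set.toFinite T)
      have := hk _ (hmaps hv)
      omega
    have hne : ∀ a ∈ T, a ≠ w := fun a ha => ne_of_mem_of_not_mem ha hw
    have hfT : ∀ a ∈ T, Function.update f w z a = f a := fun a ha =>
      Function.update_of_ne (hne a ha) _ _
    have hfw : Function.update f w z w = z := Function.update_self ..
    refine ⟨Function.update f w z, ?_, ?_, ?_⟩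
    · rintro a (rfl | ha) b (rfl | hb) hab
      · rfl
      · rw [hfw, hfT b hb] at hab
        exact absurd ⟨b, hb, hab.symm⟩ hzT
      · rw [hfw, hfT a ha] at hab
        exact absurd ⟨a, ha, hab⟩ hzT
      · rw [hfT a ha, hfT b hb] at hab
        exact hinj ha hb hab
    · rintro a (rfl | ha)
      · rw [hfw]; exact hzN.2
      · rw [hfT a ha]; exact hmaps ha
    · rintro a (rfl | ha) b (rfl | hb) hab
      · exact absurd hab H.irrefl
      · obtain rfl := huniq b hb hab
        rw [hfw, hfT b hb]; exact SimpleGraph.Adj.symm hzN.1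
      · obtain rfl := huniq a ha hab.symm
        rw [hfw, hfT a ha]; exact hzN.1
      · rw [hfT a ha, hfT b hb]; exact hadj a ha b hb hab

/-- A union of components that is a subgraph of `G` can be split off. -/
theorem SimpleGraph.isMinorOf_of_induce_compl {W V : Type*} {H : SimpleGraph W} {G : SimpleGraph V}
    {T : Set W} (hT : ∀ a ∈ T, ∀ b, H.Adj a b → b ∈ T) {f : W → V} (hinj : Set.InjOn f T)
    (hadj : ∀ a ∈ T, ∀ b ∈ T, H.Adj a b → G.Adj (f a) (f b))
    (h : (H.induce Tᶜ).IsMinorOf (G.induce (f '' T)ᶜ)) : H.IsMinorOf G := by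
  classical
  obtain ⟨B, hBc, hBd, hBa⟩ := h
  set C : W → Set V := fun w => if hw : w ∈ T then {f w} else Subtype.val '' B ⟨w, hw⟩ with hC
  have hCT : ∀ w ∈ T, C w = {f w} := fun w hw => dif_pos hw
  have hCn : ∀ w (hw : w ∉ T), C w = Subtype.val '' B ⟨w, hw⟩ := fun w hw => dif_neg hw
  have hsep : ∀ a ∈ T, ∀ b ∉ T, Disjoint (C a) (C b) := by
    intro a ha b hb
    rw [hCT a ha, hCn b hb, Set.disjoint_singleton_left]
    rintro ⟨x, -, hx⟩
    exact x.2 ⟨a, ha, hx.symm⟩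
  refine ⟨C, fun w => ?_, fun a b hab => ?_, fun a b hab => ?_⟩
  · by_cases hw : w ∈ T
    · rw [hCT w hw]
      exact G.induce_star_connected _ (f w) rfl fun x hx => Or.inl hx
    · rw [hCn w hw]
      let φ : (G.induce (f '' T)ᶜ).induce (B ⟨w, hw⟩) →g G.induce (Subtype.val '' B ⟨w, hw⟩) :=
        ⟨fun x => ⟨x.1.1, x.1, x.2, rfl⟩, fun h => h⟩
      refine (hBc ⟨w, hw⟩).map φ ?_
      rintro ⟨_, x, hx, rfl⟩
      exact ⟨⟨x, hx⟩, rfl⟩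
  · change Disjoint (C a) (C b)
    by_cases ha : a ∈ T <;> by_cases hb : b ∈ T
    · rw [hCT a ha, hCT b hb, Set.disjoint_singleton]
      exact fun h => hab (hinj ha hb h)
    · exact hsep a ha b hb
    · exact (hsep b hb a ha).symm
    · rw [hCn a ha, hCn b hb]
      exact Set.disjoint_image_of_injective Subtype.val_injective
        (hBd fun h => hab (congrArg Subtype.val h))
  · by_cases ha : a ∈ T
    · have hb := hT a ha b hab
      exact ⟨f a, by rw [hCT a ha]; rfl, f b, by rw [hCT b hb]; rfl, hadj a ha b hb hab⟩
    · have hb : b ∉ T := fun hb => ha (hT b hb a hab.symm)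
      obtain ⟨x, hx, y, hy, hxy⟩ := hBa (w₁ := ⟨a, ha⟩) (w₂ := ⟨b, hb⟩) hab
      exact ⟨x, by rw [hCn a ha]; exact ⟨x, hx, rfl⟩, y, by rw [hCn b hb]; exact ⟨y, hy, rfl⟩, hxy⟩

theorem SimpleGraph.edgesIn_add_edgesIn_compl_le {V : Type*} [Finite V] (G : SimpleGraph V)
    (s : Set V) : G.edgesIn s + G.edgesIn sᶜ ≤ G.edgeSet.ncard := by
  rw [SimpleGraph.edgesIn, SimpleGraph.edgesIn, ← Set.ncard_union_eq]
  · exact Set.ncard_le_ncard (Set.union_subset (fun _ h => h.1) fun _ h => h.1)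
  · rw [Set.disjoint_left]
    rintro e ⟨-, h1⟩ ⟨-, h2⟩
    induction e with | _ a b
    exact h2 a (by simp) (h1 a (by simp))

theorem SimpleGraph.ncard_edgeSet_le_edgesIn_compl {V : Type*} [Finite V] (G : SimpleGraph V)
    (X : Set V) :
    G.edgeSet.ncard ≤ G.edgesIn Xᶜ + X.ncard * (Nat.card V - 1) := by
  induction X, X.toFinite using Set.Finite.induction_on with
  | empty => simp [SimpleGraph.edgesIn_univ]
  | @insert x X hx _ ih =>
    have h1 : insert x (insert x X)ᶜ = Xᶜ := by
      ext z
      simp only [Set.mem_insert_iff, Set.mem_compl_iff]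
      grind
    have h2 := G.edgesIn_insert (s := (insert x X)ᶜ) (w := x) (by simp)
    have h3 : (insert x (G.neighborSet x ∩ (insert x X)ᶜ)).ncard ≤ Nat.card V :=
      Set.ncard_le_card _
    rw [Set.ncard_insert_of_notMem (by simp)] at h3
    rw [Set.ncard_insert_of_notMem hx, Nat.succ_mul]
    rw [h1] at h2
    omega

universe u v

/-- The theorem in terms of the number of edges of `G`, by induction on the order of `H`. -/
theorem SimpleGraph.isMinorOf_of_edges (N : ℕ) : ∀ (W : Type u) [Finite W] (V : Type v) [Finite V]
    [Nonempty V] (H : SimpleGraph W) (G : SimpleGraph V), Nat.card W ≤ N →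
    (({v : W | ∀ u : W, ¬ H.Adj v u}.ncard : ℝ) + 6.929 * (H.edgeSet.ncard : ℝ)) * Nat.card V ≤
      2 * G.edgeSet.ncard → H.IsMinorOf G := by
  induction N with
  | zero =>
    intro W _ V _ _ H G hN _
    have : IsEmpty W := by
      rcases Nat.card_eq_zero.1 (Nat.le_zero.1 hN) with h | h
      · exact h
      · exact absurd ‹Finite W› h.not_finite
    exact ⟨isEmptyElim, isEmptyElim, fun a => isEmptyElim a, fun a => isEmptyElim a⟩
  | succ N ih =>
    intro W _ V _ _ H G hN h
    by_cases hno : ∀ T, GrownTree H T → ∃ a ∈ T, ∃ b, b ∉ T ∧ H.Adj a b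
    · rcases Nat.eq_zero_or_pos H.edgeSet.ncard with hq | hq
      · have : IsEmpty W := ⟨fun w => by
          obtain ⟨a, -, b, -, hab⟩ := hno {w} (GrownTree.single w)
          exact (Set.ncard_pos (Set.toFinite _)).2 ⟨s(a, b), hab⟩ |>.ne' hq⟩
        exact ⟨isEmptyElim, isEmptyElim, fun a => isEmptyElim a, fun a => isEmptyElim a⟩
      · obtain ⟨k, M, s, hs, hsG, hd⟩ := G.exists_dense_minor H.edgeSet.ncard hq (by
          have : (0 : ℝ) ≤ ({v : W | ∀ u : W, ¬ H.Adj v u}.ncard : ℝ) * Nat.card V := by positivity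
          linarith)
        have : Nonempty s := hs.to_subtype
        exact (isMinorOf_of_denseFor hd hno).trans hsG
    push Not at hno
    obtain ⟨T, hT, hclosed⟩ := hno
    have hclosed : ∀ a ∈ T, ∀ b, H.Adj a b → b ∈ T := fun a ha b hab =>
      by_contra fun hb => hclosed a ha b hb hab
    have hTpos : 0 < T.ncard := (Set.ncard_pos).2 hT.nonempty
    have hcardT : Nat.card ↥Tᶜ ≤ N := by
      have := Set.ncard_add_ncard_compl T
      rw [Nat.card_coe_set_eq]
      omega
    set I : Set W := {v : W | ∀ u : W, ¬ H.Adj v u} with hI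
    have hiso : {v : ↥Tᶜ | ∀ u, ¬ (H.induce Tᶜ).Adj v u}.ncard ≤ (I \ T).ncard := by
      rw [← Set.ncard_image_of_injective _ Subtype.val_injective]
      refine Set.ncard_le_ncard ?_
      rintro _ ⟨v, hv, rfl⟩
      exact ⟨fun u huv => hv ⟨u, fun hu => v.2 (hclosed u hu _ huv.symm)⟩ huv, v.2⟩
    have hedge : (H.induce Tᶜ).edgeSet.ncard + T.ncard ≤ H.edgeSet.ncard + 1 := by
      rw [SimpleGraph.ncard_edgeSet_induce]
      have := H.edgesIn_add_edgesIn_compl_le T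
      have := hT.ncard_le
      omega
    have hGb := G.two_mul_ncard_edgeSet_le
    have hn0 : (0 : ℝ) < Nat.card V := by exact_mod_cast Nat.card_pos
    set D : ℝ := (I.ncard : ℝ) + 6.929 * (H.edgeSet.ncard : ℝ) with hD
    have hnD : D + 1 ≤ Nat.card V := by
      have : D * Nat.card V ≤ ((Nat.card V : ℝ) - 1) * Nat.card V := by linarith
      linarith [le_of_mul_le_mul_right this hn0]
    -- It suffices to find a copy of `T` whose removal keeps enough edges.
    suffices hs : ∃ f : W → V, Set.InjOn f T ∧
        (∀ a ∈ T, ∀ b ∈ T, H.Adj a b → G.Adj (f a) (f b)) ∧ T.ncard < Nat.card V ∧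
        (((I \ T).ncard : ℝ) + 6.929 * ((H.edgeSet.ncard : ℝ) + 1 - T.ncard)) *
          ((Nat.card V : ℝ) - T.ncard) ≤ 2 * (G.edgesIn (f '' T)ᶜ : ℝ) by
      obtain ⟨f, hinj, hadj, hlt, hb⟩ := hs
      refine SimpleGraph.isMinorOf_of_induce_compl hclosed hinj hadj ?_
      have hX : (f '' T).ncard + Nat.card ↥(f '' T)ᶜ = Nat.card V := by
        rw [Nat.card_coe_set_eq]; exact Set.ncard_add_ncard_compl _
      rw [hinj.ncard_image] at hX
      have : Nonempty ↥(f '' T)ᶜ := (Nat.card_pos_iff.1 (by omega)).1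
      refine ih _ _ _ _ hcardT ?_
      rw [G.ncard_edgeSet_induce]
      refine le_trans ?_ hb
      have hX' : (T.ncard : ℝ) + Nat.card ↥(f '' T)ᶜ = Nat.card V := by exact_mod_cast hX
      rw [← hX', add_sub_cancel_left]
      refine mul_le_mul_of_nonneg_right ?_ (Nat.cast_nonneg _)
      have h1 : ({v : ↥Tᶜ | ∀ u, ¬ (H.induce Tᶜ).Adj v u}.ncard : ℝ) ≤ (I \ T).ncard := by
        exact_mod_cast hiso
      have h2 : ((H.induce Tᶜ).edgeSet.ncard : ℝ) + T.ncard ≤ H.edgeSet.ncard + 1 := by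
        exact_mod_cast hedge
      linarith
    rcases (Nat.succ_le_of_lt hTpos).eq_or_lt with hk | hk
    · -- An isolated vertex of `H` is mapped to a vertex of minimum degree.
      obtain ⟨w, rfl⟩ := Set.ncard_eq_one.1 hk.symm
      obtain ⟨v, hv⟩ := G.exists_ncard_neighborSet_le
      have hwI : w ∈ I := fun u hu => by
        obtain rfl : u = w := hclosed w rfl u hu
        exact H.irrefl hu
      have hI1 : ((I \ {w}).ncard : ℝ) + 1 = I.ncard := by
        exact_mod_cast Set.ncard_sdiff_singleton_add_one hwI
      have hD1 : 1 ≤ D := by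
        have : (0 : ℝ) ≤ (I \ {w}).ncard := Nat.cast_nonneg _
        have : (0 : ℝ) ≤ H.edgeSet.ncard := Nat.cast_nonneg _
        linarith
      refine ⟨fun _ => v, by simp, ?_, ?_, ?_⟩
      · rintro a rfl b rfl hab
        exact absurd hab H.irrefl
      · rw [Set.ncard_singleton]
        have : (1 : ℝ) < Nat.card V := by linarith
        exact_mod_cast this
      · rw [Set.ncard_singleton, Set.image_singleton]
        have he : (G.edgeSet.ncard : ℝ) = G.edgesIn {v}ᶜ + (G.neighborSet v).ncard := by
          exact_mod_cast G.edgesIn_compl_singleton v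
        have e1 : ((I \ {w}).ncard : ℝ) + 6.929 * ((H.edgeSet.ncard : ℝ) + 1 - (1 : ℕ)) = D - 1 := by
          push_cast; linarith
        rw [e1, Nat.cast_one]
        generalize (G.neighborSet v).ncard = δ at *
        generalize G.edgesIn {v}ᶜ = e' at *
        generalize (G.edgeSet.ncard : ℝ) = e at *
        generalize (Nat.card V : ℝ) = n at *
        refine le_of_mul_le_mul_right ?_ hn0
        -- `2(e - δ) ≥ 2e(n - 2)/n ≥ D(n - 2) ≥ (D - 1)(n - 1)`
        have e2 : 0 ≤ (2 * e - D * n) * (n - 2) := mul_nonneg (by linarith) (by linarith)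
        have e3 : 0 ≤ (n - 1 - D) * n := mul_nonneg (by linarith) hn0.le
        have e4 : (e' : ℝ) = e - δ := by linarith
        rw [e4]
        linarith
    · -- A larger tree is embedded into a subgraph of minimum degree at least `D / 2`.
      have hk' : (2 : ℝ) ≤ T.ncard := by exact_mod_cast hk
      have hDk : 6.929 * ((T.ncard : ℝ) - 1) ≤ D := by
        have h2 : (T.ncard : ℝ) ≤ H.edgeSet.ncard + 1 := by
          exact_mod_cast (by omega : T.ncard ≤ H.edgeSet.ncard + 1)
        have : (0 : ℝ) ≤ I.ncard := Nat.cast_nonneg _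
        linarith
      obtain ⟨U, hU, hdeg⟩ := G.exists_minDegree (D / 2) _ Set.univ le_rfl Set.univ_nonempty (by
        rw [Set.ncard_univ, G.edgesIn_univ]; linarith)
      obtain ⟨f, hinj, -, hadj⟩ := hT.exists_embedding (G := G) hU T.ncard (fun x hx => by
        have := hdeg x hx
        have : (T.ncard : ℝ) ≤ (G.neighborSet x ∩ U).ncard + 1 := by linarith
        exact_mod_cast this) le_rfl
      refine ⟨f, hinj, hadj, ?_, ?_⟩
      · have : (T.ncard : ℝ) < Nat.card V := by linarith
        exact_mod_cast this
      · have hX := G.ncard_edgeSet_le_edgesIn_compl (f '' T)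
        rw [hinj.ncard_image] at hX
        have hX' : (G.edgeSet.ncard : ℝ) ≤
            G.edgesIn (f '' T)ᶜ + T.ncard * ((Nat.card V : ℝ) - 1) := by
          rw [← Nat.cast_one, ← Nat.cast_sub Nat.card_pos]
          exact_mod_cast hX
        have hI' : ((I \ T).ncard : ℝ) ≤ I.ncard := by
          exact_mod_cast Set.ncard_le_ncard Set.sdiff_subset
        have e1 : ((I \ T).ncard : ℝ) + 6.929 * ((H.edgeSet.ncard : ℝ) + 1 - T.ncard) ≤
            D - 6.929 * ((T.ncard : ℝ) - 1) := by linarith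
        have hkn : (T.ncard : ℝ) ≤ Nat.card V := by linarith
        refine (mul_le_mul_of_nonneg_right e1 (sub_nonneg.2 hkn)).trans ?_
        generalize (T.ncard : ℝ) = k at *
        generalize (G.edgeSet.ncard : ℝ) = e at *
        generalize (Nat.card V : ℝ) = n at *
        have e2 : 0 ≤ (D - 6.929 * (k - 1)) * k := mul_nonneg (by linarith) (by linarith)
        have e3 : 0 ≤ (6.929 * (k - 1) - 2 * k) * n := mul_nonneg (by linarith) hn0.le
        linarith

/-- For every graph `H` with `i` isolated vertices and `q` edges, every graph `G` with
average degree at least `i + 6.929q` contains `H` as a minor. -/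
theorem isolated_vertices_linear_minor {W V : Type*} [Fintype W] [Fintype V] [Nonempty V]
    (H : SimpleGraph W) (G : SimpleGraph V)
    (h : ({v : W | ∀ u : W, ¬ H.Adj v u}.ncard : ℝ) + 6.929 * (H.edgeSet.ncard : ℝ) ≤
      G.averageDegree) :
    H.IsMinorOf G := by
  refine SimpleGraph.isMinorOf_of_edges _ W V H G le_rfl ?_
  rwa [SimpleGraph.averageDegree, le_div_iff₀ (by exact_mod_cast Nat.card_pos)] at h
end

section
/- Let H be a simple graph with t vertices and q edges, and let G be a simple graph with n ≥ t vertices and average degree at least d. Then there is a spanning subgraph R of H with at least d·q/(n−1) edges such that R is isomorphic to a subgraph of G. -/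
/-!
The proof is a first-moment argument. Fix an injection `e : W ↪ V` and compose it with a uniformly
random permutation `σ` of `V`, keeping exactly those edges of `H` that land on edges of `G`.
Since permutations act `2`-transitively, every pair of distinct vertices of `V` is sent to an edge
of `G` with the same probability (`adjPerms_const`); double counting (`adjPerms_total`) shows that
it is `2m / (n (n - 1))`, that is, the average degree over `n - 1`. Hence the expected number of
edges kept is `q` times this, and some `σ` does at least as well as the average.

Edges are counted as half the number of ordered adjacent pairs (`sum_adj_eq`).
-/

open SimpleGraph

open scoped Classical in
theorem sum_adj_eq {V : Type*} [Fintype V] (G : SimpleGraph V) :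
    ∑ a, ∑ b, (if G.Adj a b then (1 : ℝ) else 0) = 2 * (G.edgeSet.ncard : ℝ) := by
  have h := G.sum_degrees_eq_twice_card_edges
  have h2 : G.edgeSet.ncard = G.edgeFinset.card := by
    rw [← SimpleGraph.coe_edgeFinset, Set.ncard_coe_finset]
  rw [h2]
  have h3 : ∀ a, ∑ b, (if G.Adj a b then (1 : ℝ) else 0) = (G.degree a : ℝ) := by
    intro a
    rw [Finset.sum_boole, ← SimpleGraph.card_neighborFinset_eq_degree,
      SimpleGraph.neighborFinset_eq_filter]
  simp_rw [h3]
  exact_mod_cast h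

open scoped Classical in
/-- The number, as a real, of permutations of the vertices of `G` that send the pair `(x, y)` to
an adjacent pair. -/
noncomputable def adjPerms {V : Type*} [Fintype V] (G : SimpleGraph V) (x y : V) : ℝ :=
  ∑ σ : Equiv.Perm V, if G.Adj (σ x) (σ y) then (1 : ℝ) else 0

theorem adjPerms_const {V : Type*} [Fintype V] (G : SimpleGraph V) {x y x' y' : V}
    (h : x ≠ y) (h' : x' ≠ y') : adjPerms G x y = adjPerms G x' y' := by
  classical
  obtain ⟨τ, hx, hy⟩ : ∃ τ : Equiv.Perm V, τ x = x' ∧ τ y = y' := by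
    refine ⟨Equiv.swap (Equiv.swap x x' y) y' * Equiv.swap x x', ?_, ?_⟩
    · rw [Equiv.Perm.mul_apply, Equiv.swap_apply_left]
      refine Equiv.swap_apply_of_ne_of_ne ?_ h'
      intro hh
      apply h
      apply (Equiv.swap x x').injective
      rw [← hh, Equiv.swap_apply_left]
    · rw [Equiv.Perm.mul_apply, Equiv.swap_apply_left]
  unfold adjPerms
  rw [← Equiv.sum_comp (Equiv.mulRight τ)]
  simp [hx, hy]

open scoped Classical in
theorem adjPerms_total {V : Type*} [Fintype V] (G : SimpleGraph V) :
    ∑ x, ∑ y, adjPerms G x y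
      = (Fintype.card (Equiv.Perm V) : ℝ) * (2 * (G.edgeSet.ncard : ℝ)) := by
  unfold adjPerms
  have h1 : ∀ x : V, ∑ y, ∑ σ : Equiv.Perm V, (if G.Adj (σ x) (σ y) then (1 : ℝ) else 0)
      = ∑ σ : Equiv.Perm V, ∑ y, (if G.Adj (σ x) y then (1 : ℝ) else 0) := by
    intro x
    rw [Finset.sum_comm]
    refine Finset.sum_congr rfl fun σ _ => ?_
    exact Equiv.sum_comp σ (fun y => if G.Adj (σ x) y then (1 : ℝ) else 0)
  simp_rw [h1]
  rw [Finset.sum_comm]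
  have h2 : ∀ σ : Equiv.Perm V, ∑ x, ∑ y, (if G.Adj (σ x) y then (1 : ℝ) else 0)
      = 2 * (G.edgeSet.ncard : ℝ) := by
    intro σ
    rw [← sum_adj_eq]
    exact Equiv.sum_comp σ (fun x => ∑ y, if G.Adj x y then (1 : ℝ) else 0)
  rw [Finset.sum_congr rfl fun σ _ => h2 σ, Finset.sum_const, Finset.card_univ, nsmul_eq_mul]

open scoped Classical in
/-- The `n (n - 1)` ordered pairs of distinct vertices share `adjPerms_total` equally; the diagonal
contributes nothing because `G` has no loops. -/
theorem adjPerms_mul {V : Type*} [Fintype V] (G : SimpleGraph V) {x y : V} (h : x ≠ y) :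
    (Fintype.card V : ℝ) * ((Fintype.card V : ℝ) - 1) * adjPerms G x y
      = (Fintype.card (Equiv.Perm V) : ℝ) * (2 * (G.edgeSet.ncard : ℝ)) := by
  rw [← adjPerms_total]
  have h1 : ∀ a b : V, adjPerms G a b
      = adjPerms G x y - (if a = b then adjPerms G x y else 0) := by
    intro a b
    by_cases hab : a = b
    · subst hab
      simp [adjPerms]
    · simp [hab, adjPerms_const G hab h]
  have h2 : ∑ a, ∑ b, adjPerms G a b
      = ∑ a : V, ∑ b : V, (adjPerms G x y - (if a = b then adjPerms G x y else 0)) :=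
    Finset.sum_congr rfl fun a _ => Finset.sum_congr rfl fun b _ => h1 a b
  rw [h2]
  simp only [Finset.sum_sub_distrib, Finset.sum_ite_eq, Finset.mem_univ, if_true,
    Finset.sum_const, Finset.card_univ, nsmul_eq_mul]
  ring

/-- For `H` with `t` vertices and `q` edges and `G` with `n ≥ t` vertices and average
degree at least `d`, there is a spanning subgraph `R` of `H` with at least `dq/(n−1)`
edges such that `R` is isomorphic to a subgraph of `G`. -/
theorem random_spanning_subgraph {W V : Type*} [Fintype W] [Fintype V] [Nonempty V]
    (H : SimpleGraph W) (G : SimpleGraph V) (d : ℝ)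
    (hn : Nat.card W ≤ Nat.card V) (hd : d ≤ G.averageDegree) :
    ∃ R : SimpleGraph W, R ≤ H ∧
      d * (H.edgeSet.ncard : ℝ) / ((Nat.card V : ℝ) - 1) ≤ (R.edgeSet.ncard : ℝ) ∧
      ∃ f : W ↪ V, ∀ ⦃a b : W⦄, R.Adj a b → G.Adj (f a) (f b) := by
  classical
  obtain ⟨e⟩ : Nonempty (W ↪ V) := by
    rw [Nat.card_eq_fintype_card, Nat.card_eq_fintype_card] at hn
    exact Function.Embedding.nonempty_of_card_le hn
  let R : Equiv.Perm V → SimpleGraph W := fun σ => H ⊓ G.comap (fun w => σ (e w))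
  suffices hs : ∃ σ, d * (H.edgeSet.ncard : ℝ) / ((Nat.card V : ℝ) - 1)
      ≤ ((R σ).edgeSet.ncard : ℝ) by
    obtain ⟨σ, hσ⟩ := hs
    exact ⟨R σ, inf_le_left, hσ, e.trans σ.toEmbedding, fun a b hab => hab.2⟩
  rcases subsingleton_or_nontrivial V with hV | hV
  -- With `n = 1` the denominator is `0`, so the bound reads `0 ≤ _`.
  · refine ⟨1, ?_⟩
    have : Nat.card V = 1 := Nat.card_unique
    rw [this]
    simp
  obtain ⟨x, y, hxy⟩ := exists_pair_ne V
  have hsum : ∑ σ, ((R σ).edgeSet.ncard : ℝ) = (H.edgeSet.ncard : ℝ) * adjPerms G x y := by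
    have h1 : ∑ σ, 2 * ((R σ).edgeSet.ncard : ℝ)
        = 2 * (H.edgeSet.ncard : ℝ) * adjPerms G x y := by
      simp_rw [← sum_adj_eq]
      rw [Finset.sum_comm, Finset.sum_mul]
      refine Finset.sum_congr rfl fun a _ => ?_
      rw [Finset.sum_comm, Finset.sum_mul]
      refine Finset.sum_congr rfl fun b _ => ?_
      by_cases hab : H.Adj a b
      · rw [adjPerms_const G hxy (e.injective.ne hab.ne)]
        simp [R, hab, adjPerms]
      · simp [R, hab]
    rw [← Finset.mul_sum] at h1
    linarith
  have hc := adjPerms_mul G hxy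
  have hN : (1 : ℝ) < Fintype.card V := by exact_mod_cast Fintype.one_lt_card
  have havg : (Fintype.card (Equiv.Perm V) : ℝ) * G.averageDegree
      = adjPerms G x y * ((Fintype.card V : ℝ) - 1) := by
    have hne : (Fintype.card V : ℝ) ≠ 0 := by positivity
    unfold SimpleGraph.averageDegree
    rw [Nat.card_eq_fintype_card]
    field_simp
    linarith
  have hle : ∑ _σ : Equiv.Perm V, d * (H.edgeSet.ncard : ℝ) / ((Nat.card V : ℝ) - 1)
      ≤ ∑ σ, ((R σ).edgeSet.ncard : ℝ) := by
    rw [hsum, Finset.sum_const, Finset.card_univ, nsmul_eq_mul, Nat.card_eq_fintype_card,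
      ← mul_div_assoc, div_le_iff₀ (by linarith), mul_assoc, ← havg]
    calc (Fintype.card (Equiv.Perm V) : ℝ) * (d * (H.edgeSet.ncard : ℝ))
        ≤ (Fintype.card (Equiv.Perm V) : ℝ) * (G.averageDegree * (H.edgeSet.ncard : ℝ)) := by
          gcongr
      _ = _ := by ring
  obtain ⟨σ, -, hσ⟩ := Finset.exists_le_of_sum_le Finset.univ_nonempty hle
  exact ⟨σ, hσ⟩
end

section
/- Let c₁ > 2 and c₂ > 1 be real numbers. Define a₁ := c₁/2 + 1, b₁ := 2, a₂ := 2, b₂ := 1 + 1/c₁, a₃ := c₂, b₃ := 1, a₄ := 4 − c₁/2, b₄ := c₂. Assume that for 1 ≤ i ≤ 4 we have 0 < 2bᵢ − aᵢ ≤ 3 and bᵢ < aᵢ. Let α ≥ 4 and β be real numbers such that for 1 ≤ i ≤ 4, α ≥ 4/(2bᵢ − aᵢ) and β ≥ 4(aᵢ − bᵢ)/(aᵢ(2bᵢ − aᵢ)). Then for every simple graph H with t vertices and q edges, every simple graph G with average degree at least α·t + β·q contains H as a minor. -/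
/-!
Let `D = ⌊(αt + βq)/4⌋`, so that `G` has at least `2D|V|` edges. All minors below are found by
taking a minor on `m` vertices with at least `f m` edges, with `m` as small as possible
(`exists_minimal`): then every vertex has degree more than `f m - f (m - 1)`, and the ends of every
edge have at least about `f m - f (m - 1)` common neighbours, since otherwise deleting the vertex,
or contracting the edge, would give a smaller such minor.

With `f m = 2Dm`, the neighbourhood of a vertex of degree at most `4D` is a minor `K` with
`n ≤ 4D` vertices and minimum degree at least `2D` (`exists_mader`). If `n` is small, the first
pair `(a, b)` is realised: `K` has at most `aD + 1` vertices and minimum degree at least `bD`.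
Otherwise a second minimisation, starting from `K`, uses the maximum of the two potentials
`Dm - D²/2` and `(1 + 1/c₁)Dm - Dn/c₁`, which cross at `m = n - c₁D/2`
(`exists_four_cases`). If the minimiser has more vertices than that (up to one), a closed
neighbourhood of a vertex of degree at most `2D` realises the second pair. If not, the minimiser has
at most `(4 - c₁/2)D + 1` vertices; either its minimum degree is at least `c₂D`, the fourth pair,
or a closed neighbourhood of a vertex of degree at most `c₂D` realises the third.

In a graph with at most `aD + 1` vertices and minimum degree at least `bD`, a uniformly random
placement of the vertices of `H` sends at most `q(a - b)/a` edges of `H` to non-edges on average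
(`exists_placement`), while nonadjacent vertices have at least `(2b - a)D + 1` common neighbours.
The bounds on `α` and `β` say exactly that this is enough to reroute each missing edge
through its own common neighbour outside the placed vertices, which Hall's theorem chooses
(`isMinorOf_of_placement`, `isMinorOf_of_dense`). The bound `2b - a ≤ 3` absorbs the rounding of
`D`, and `α ≥ 4` gives `t ≤ D`, which leaves room for placing `H`.
-/

open SimpleGraph

namespace SparseMinor

/-! ### Minors -/

lemma connected_star {V : Type*} (G : SimpleGraph V) (B : Set V) (x : V) (hx : x ∈ B)
    (h : ∀ y ∈ B, y = x ∨ G.Adj x y) : (G.induce B).Connected := by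
  have hr : ∀ y : B, (G.induce B).Reachable ⟨x, hx⟩ y := by
    rintro ⟨y, hy⟩
    rcases h y hy with rfl | hadj
    · exact Reachable.refl _
    · exact Adj.reachable (G := G.induce B) (by simpa using hadj)
  have : Nonempty B := ⟨⟨x, hx⟩⟩
  exact Connected.mk fun u v => (hr u).symm.trans (hr v)

lemma isMinorOf_of_hom {U V : Type*} {M : SimpleGraph U} {G : SimpleGraph V} (f : U → V)
    (hf : Function.Injective f) (h : ∀ u v, M.Adj u v → G.Adj (f u) (f v)) : M.IsMinorOf G := by
  refine ⟨fun u => {f u}, fun u => connected_star G _ (f u) rfl (fun y hy => Or.inl hy), ?_, ?_⟩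
  · intro u v huv
    simpa using fun e => huv (hf e)
  · intro u v huv
    exact ⟨f u, rfl, f v, rfl, h u v huv⟩

lemma isMinorOf_trans {W U V : Type*} {H : SimpleGraph W} {M : SimpleGraph U} {G : SimpleGraph V}
    (h₁ : H.IsMinorOf M) (h₂ : M.IsMinorOf G) : H.IsMinorOf G := by
  obtain ⟨A, hA, hAd, hAa⟩ := h₁
  obtain ⟨B, hB, hBd, hBa⟩ := h₂
  refine ⟨fun w => ⋃ u ∈ A w, B u, ?_, ?_, ?_⟩
  · intro w
    set C : Set V := ⋃ u ∈ A w, B u with hC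
    have hsub : ∀ u ∈ A w, B u ⊆ C := fun u hu => Set.subset_biUnion_of_mem hu
    have hin : ∀ u (hu : u ∈ A w) (x y : B u),
        (G.induce C).Reachable ⟨x, hsub u hu x.2⟩ ⟨y, hsub u hu y.2⟩ := by
      intro u hu x y
      exact ((hB u).preconnected x y).map
        ((SimpleGraph.induceHomOfLE G (hsub u hu)).toHom)
    have key : ∀ u u' : A w, (M.induce (A w)).Reachable u u' → ∀ (x : B u) (y : B u'),
        (G.induce C).Reachable ⟨x, hsub u u.2 x.2⟩ ⟨y, hsub u' u'.2 y.2⟩ := by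
      intro u u' hr
      rw [reachable_iff_reflTransGen] at hr
      induction hr with
      | refl => exact fun x y => hin u u.2 x y
      | @tail b c _ hadj ih =>
        intro x y
        obtain ⟨p, hp, r, hr, hpr⟩ := hBa (show M.Adj b c by simpa using hadj)
        refine (ih x ⟨p, hp⟩).trans (Reachable.trans ?_ (hin c c.2 ⟨r, hr⟩ y))
        exact Adj.reachable (G := G.induce C) (by simpa using hpr)
    obtain ⟨u₀⟩ := (hA w).nonempty
    obtain ⟨x₀⟩ := (hB u₀).nonempty
    have : Nonempty C := ⟨⟨x₀, hsub u₀ u₀.2 x₀.2⟩⟩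
    refine Connected.mk ?_
    rintro ⟨x, hx⟩ ⟨y, hy⟩
    obtain ⟨u, hu, hxu⟩ := Set.mem_iUnion₂.1 hx
    obtain ⟨u', hu', hyu⟩ := Set.mem_iUnion₂.1 hy
    exact key ⟨u, hu⟩ ⟨u', hu'⟩ ((hA w).preconnected _ _) ⟨x, hxu⟩ ⟨y, hyu⟩
  · intro w₁ w₂ hw
    simp only [Set.disjoint_iUnion_left, Set.disjoint_iUnion_right]
    intro u hu u' hu'
    refine hBd ?_
    rintro rfl
    exact Set.disjoint_left.1 (hAd hw) (by assumption) (by assumption)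
  · intro w₁ w₂ hw
    obtain ⟨u, hu, u', hu', huu⟩ := hAa hw
    obtain ⟨x, hx, y, hy, hxy⟩ := hBa huu
    exact ⟨x, Set.mem_biUnion hu hx, y, Set.mem_biUnion hu' hy, hxy⟩

/-! ### Counting edges, deletions and contractions -/

lemma sum_ncard_neighborSet {V : Type*} [Fintype V] (G : SimpleGraph V) :
    ∑ v, (G.neighborSet v).ncard = 2 * G.edgeSet.ncard := by
  classical
  rw [Set.ncard_eq_toFinset_card' G.edgeSet, ← SimpleGraph.edgeFinset,
    ← sum_degrees_eq_twice_card_edges]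
  refine Finset.sum_congr rfl fun v _ => ?_
  rw [Set.ncard_eq_toFinset_card', ← SimpleGraph.neighborFinset, card_neighborFinset_eq_degree]

lemma two_mul_ncard_edgeSet_le {V : Type*} [Fintype V] (G : SimpleGraph V) :
    2 * G.edgeSet.ncard ≤ Fintype.card V * (Fintype.card V - 1) := by
  classical
  rw [← sum_ncard_neighborSet, ← smul_eq_mul, ← Finset.card_univ, ← Finset.sum_const]
  refine Finset.sum_le_sum fun v _ => ?_
  rw [Set.ncard_eq_toFinset_card', ← SimpleGraph.neighborFinset, card_neighborFinset_eq_degree]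
  have := G.degree_lt_card_verts v
  rw [Finset.card_univ]; omega

lemma exists_ncard_neighborSet_le {V : Type*} [Fintype V] [Nonempty V] (G : SimpleGraph V) (k : ℕ)
    (h : 2 * G.edgeSet.ncard ≤ k * Fintype.card V) : ∃ v, (G.neighborSet v).ncard ≤ k := by
  by_contra! hc
  rw [← sum_ncard_neighborSet] at h
  have : ∑ v : V, k < ∑ v, (G.neighborSet v).ncard :=
    Finset.sum_lt_sum_of_nonempty Finset.univ_nonempty fun v _ => hc v
  simp only [Finset.sum_const, Finset.card_univ, smul_eq_mul] at this
  linarith [mul_comm k (Fintype.card V)]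

lemma ncard_edgeSet_le_induce_ne {V : Type*} [Finite V] (G : SimpleGraph V) (y : V) :
    G.edgeSet.ncard ≤ (G.induce {u | u ≠ y}).edgeSet.ncard + (G.neighborSet y).ncard := by
  have hsub : G.edgeSet ⊆ Sym2.map Subtype.val '' (G.induce {u | u ≠ y}).edgeSet ∪
      (fun w => s(y, w)) '' G.neighborSet y := by
    intro e
    induction e with
    | _ p r =>
      intro h
      rw [mem_edgeSet] at h
      by_cases hp : p = y
      · subst hp; exact Or.inr ⟨r, h, rfl⟩
      by_cases hr : r = y
      · subst hr; exact Or.inr ⟨p, h.symm, Sym2.eq_swap⟩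
      · exact Or.inl ⟨s(⟨p, hp⟩, ⟨r, hr⟩), by simpa using h, rfl⟩
  calc G.edgeSet.ncard ≤ _ := Set.ncard_le_ncard hsub (Set.toFinite _)
    _ ≤ _ := Set.ncard_union_le _ _
    _ ≤ _ := Nat.add_le_add (Set.ncard_image_le (Set.toFinite _))
      (Set.ncard_image_le (Set.toFinite _))

/-- The graph obtained by contracting `y` into `x`, on the vertices other than `y`: `x` gains the
neighbours of `y`, and loops and multiple edges are discarded. The definition does not require
`x` and `y` to be adjacent. -/
def contract {V : Type*} (G : SimpleGraph V) (x y : V) : SimpleGraph {u | u ≠ y} where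
  Adj u v := u ≠ v ∧ (G.Adj u v ∨ (u.1 = x ∧ G.Adj y v) ∨ (v.1 = x ∧ G.Adj y u))
  symm := ⟨by
    rintro u v ⟨h, h' | h' | h'⟩
    · exact ⟨h.symm, Or.inl h'.symm⟩
    · exact ⟨h.symm, Or.inr (Or.inr h')⟩
    · exact ⟨h.symm, Or.inr (Or.inl h')⟩⟩
  loopless := ⟨fun u h => h.1 rfl⟩

lemma contract_isMinorOf {V : Type*} (G : SimpleGraph V) (x y : V) (hxy : G.Adj x y) :
    (contract G x y).IsMinorOf G := by
  refine ⟨fun u => {v | v = u ∨ (u.1 = x ∧ v = y)}, ?_, ?_, ?_⟩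
  · intro u
    refine connected_star G _ u.1 (Or.inl rfl) ?_
    rintro v (h | ⟨h, rfl⟩)
    · exact Or.inl h
    · rw [h]; exact Or.inr hxy
  · rintro ⟨u, hu⟩ ⟨v, hv⟩ huv
    rw [Set.disjoint_left]
    simp only [Set.mem_ofPred_eq, ne_eq, Subtype.mk.injEq] at *
    grind
  · rintro u v ⟨h, h' | ⟨h₁, h'⟩ | ⟨h₁, h'⟩⟩
    · exact ⟨u, Or.inl rfl, v, Or.inl rfl, h'⟩
    · exact ⟨y, Or.inr ⟨h₁, rfl⟩, v, Or.inl rfl, h'⟩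
    · exact ⟨u, Or.inl rfl, y, Or.inr ⟨h₁, rfl⟩, h'.symm⟩

lemma ncard_edgeSet_le_contract {V : Type*} [Finite V] (G : SimpleGraph V) (x y : V)
    (hxy : G.Adj x y) :
    G.edgeSet.ncard ≤ (contract G x y).edgeSet.ncard + (G.commonNeighbors x y).ncard + 1 := by
  have hdel := ncard_edgeSet_le_induce_ne G y
  -- the neighbours of `y` that become new neighbours of `x`
  set R : Set {u | u ≠ y} := {w | w.1 ≠ x ∧ G.Adj y w ∧ ¬ G.Adj x w} with hR
  have hsub : (G.induce {u | u ≠ y}).edgeSet ∪ (fun w => s(⟨x, hxy.ne⟩, w)) '' R ⊆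
      (contract G x y).edgeSet := by
    apply Set.union_subset
    · intro e
      induction e with
      | _ p r =>
        intro h
        rw [mem_edgeSet] at h ⊢
        exact ⟨h.ne, Or.inl (by simpa using h)⟩
    · rintro _ ⟨w, hw, rfl⟩
      rw [mem_edgeSet]
      exact ⟨fun h => hw.1 (by rw [← h]), Or.inr (Or.inl ⟨rfl, hw.2.1⟩)⟩
  have hdisj : Disjoint (G.induce {u | u ≠ y}).edgeSet
      ((fun w => s((⟨x, hxy.ne⟩ : {u | u ≠ y}), w)) '' R) := by
    rw [Set.disjoint_right]
    rintro _ ⟨w, hw, rfl⟩ h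
    rw [mem_edgeSet] at h
    exact hw.2.2 (by simpa using h)
  have hinj : Function.Injective (fun w => s((⟨x, hxy.ne⟩ : {u | u ≠ y}), w)) := by
    intro w w' h
    exact Sym2.congr_right.1 h
  have h1 := Set.ncard_le_ncard hsub (Set.toFinite _)
  rw [Set.ncard_union_eq hdisj, Set.ncard_image_of_injective _ hinj] at h1
  have h2 : G.neighborSet y ⊆ Subtype.val '' R ∪ G.commonNeighbors x y ∪ {x} := by
    intro w hw
    by_cases hwx : w = x
    · exact Or.inr hwx
    by_cases hx : G.Adj x w
    · exact Or.inl (Or.inr ⟨hx, hw⟩)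
    · exact Or.inl (Or.inl ⟨⟨w, hw.ne'⟩, ⟨hwx, hw, hx⟩, rfl⟩)
  have h3 : (G.neighborSet y).ncard ≤ R.ncard + (G.commonNeighbors x y).ncard + 1 := by
    refine (Set.ncard_le_ncard h2 (Set.toFinite _)).trans ?_
    refine (Set.ncard_union_le _ _).trans ?_
    rw [Set.ncard_singleton]
    have := Set.ncard_union_le (Subtype.val '' R) (G.commonNeighbors x y)
    have h4 : (Subtype.val '' R).ncard ≤ R.ncard := Set.ncard_image_le (Set.toFinite _)
    omega
  omega

/-- Every finite graph is isomorphic to one on `Fin m`. -/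
lemma exists_fin_model {V : Type*} [Finite V] (G : SimpleGraph V) (m : ℕ) (hm : Nat.card V = m) :
    ∃ M : SimpleGraph (Fin m), M.IsMinorOf G ∧ M.edgeSet.ncard = G.edgeSet.ncard := by
  subst hm
  let e := Finite.equivFin V
  refine ⟨G.comap e.symm, isMinorOf_of_hom e.symm e.symm.injective fun u v h => h, ?_⟩
  have i : (G.comap e.symm) ≃g G := SimpleGraph.Iso.comap e.symm G
  exact Nat.card_congr i.mapEdgeSet

/-! ### Minimal minors -/

/-- A minor of `G` with the least number `m ≥ k` of vertices among those having at least `f m`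
edges, with superfluous edges removed. Deleting a vertex or contracting an edge leaves this
class whenever `m > k`, which gives the last two conclusions. -/
lemma exists_minimal {V : Type*} [Finite V] (G : SimpleGraph V) (f : ℕ → ℝ)
    (k : ℕ) (hk : k ≤ Nat.card V) (hE : f (Nat.card V) ≤ G.edgeSet.ncard) :
    ∃ (m : ℕ) (M : SimpleGraph (Fin m)), M.IsMinorOf G ∧ k ≤ m ∧ m ≤ Nat.card V ∧
      f m ≤ M.edgeSet.ncard ∧ (0 ≤ f m → (M.edgeSet.ncard : ℝ) < f m + 1) ∧
      (k + 1 ≤ m → ∀ v, f m - f (m - 1) < (M.neighborSet v).ncard) ∧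
      (k + 1 ≤ m → ∀ x y, M.Adj x y →
        f m - f (m - 1) < (M.commonNeighbors x y).ncard + 1) := by
  classical
  let P : ℕ → Prop := fun m => ∃ M : SimpleGraph (Fin m), M.IsMinorOf G ∧ k ≤ m ∧
    f m ≤ M.edgeSet.ncard
  have hP : ∃ m, P m := by
    obtain ⟨M, hM, hMe⟩ := exists_fin_model G _ rfl
    exact ⟨_, M, hM, hk, by rwa [hMe]⟩
  have hle : Nat.find hP ≤ Nat.card V := by
    obtain ⟨M, hM, hMe⟩ := exists_fin_model G _ rfl
    exact Nat.find_min' hP ⟨M, hM, hk, by rwa [hMe]⟩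
  obtain ⟨M₀, hM₀, hkm, hM₀e⟩ := Nat.find_spec hP
  have hmin : ∀ j, j < Nat.find hP → ¬ P j := fun j hj => Nat.find_min hP hj
  generalize Nat.find hP = m at *
  have hcard : ∀ y : Fin m, Nat.card {u | u ≠ y} = m - 1 := by
    intro y
    rw [Nat.card_eq_fintype_card]
    simp [Set.coe_ofPred, Fintype.card_subtype_compl]
  -- exactly `⌈f m⌉₊` edges are kept, so that the number of edges is less than `f m + 1`
  obtain ⟨S, hS, hScard⟩ := Set.exists_subset_card_eq (s := M₀.edgeSet)
    (n := ⌈f m⌉₊) (Nat.ceil_le.2 hM₀e)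
  have hSE : (fromEdgeSet S).edgeSet = S := by
    rw [edgeSet_fromEdgeSet]
    ext e
    simp only [Set.mem_sdiff]
    refine ⟨fun h => h.1, fun h => ⟨h, fun hd => M₀.not_isDiag_of_mem_edgeSet (hS h) hd⟩⟩
  have hMG : (fromEdgeSet S).IsMinorOf G := by
    refine isMinorOf_trans (isMinorOf_of_hom id Function.injective_id ?_) hM₀
    intro u v h
    rw [← mem_edgeSet, hSE] at h
    exact hS h
  have hfM : f m ≤ (fromEdgeSet S).edgeSet.ncard := by
    rw [hSE, hScard]; exact Nat.le_ceil _
  refine ⟨m, fromEdgeSet S, hMG, hkm, hle, hfM, ?_, ?_, ?_⟩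
  · intro h0
    rw [hSE, hScard]
    exact Nat.ceil_lt_add_one h0
  · intro hk1 v
    by_contra! hc
    refine hmin (m - 1) (by omega) ?_
    obtain ⟨N, hN, hNe⟩ := exists_fin_model ((fromEdgeSet S).induce {u | u ≠ v}) _ (hcard v)
    refine ⟨N, isMinorOf_trans hN (isMinorOf_trans ?_ hMG), by omega, ?_⟩
    · exact isMinorOf_of_hom Subtype.val Subtype.val_injective fun u v h => h
    · have := ncard_edgeSet_le_induce_ne (fromEdgeSet S) v
      have h' : ((fromEdgeSet S).edgeSet.ncard : ℝ) ≤ N.edgeSet.ncard +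
        ((fromEdgeSet S).neighborSet v).ncard := by rw [hNe]; exact_mod_cast this
      linarith
  · intro hk1 x y hxy
    by_contra! hc
    refine hmin (m - 1) (by omega) ?_
    obtain ⟨N, hN, hNe⟩ := exists_fin_model (contract (fromEdgeSet S) x y) _ (hcard y)
    refine ⟨N, isMinorOf_trans hN (isMinorOf_trans (contract_isMinorOf _ x y hxy) hMG),
      by omega, ?_⟩
    have := ncard_edgeSet_le_contract (fromEdgeSet S) x y hxy
    have h' : ((fromEdgeSet S).edgeSet.ncard : ℝ) ≤ N.edgeSet.ncard +
      ((fromEdgeSet S).commonNeighbors x y).ncard + 1 := by rw [hNe]; exact_mod_cast this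
    linarith


/-! ### Placing `H` in a dense graph -/

lemma exists_perm_pair {U : Type*} [DecidableEq U] {u₁ u₂ v₁ v₂ : U} (hu : u₁ ≠ u₂)
    (hv : v₁ ≠ v₂) : ∃ τ : Equiv.Perm U, τ u₁ = v₁ ∧ τ u₂ = v₂ := by
  refine ⟨Equiv.swap (Equiv.swap u₁ v₁ u₂) v₂ * Equiv.swap u₁ v₁, ?_, ?_⟩
  · rw [Equiv.Perm.mul_apply, Equiv.swap_apply_left]
    refine Equiv.swap_apply_of_ne_of_ne ?_ hv
    intro h
    apply hu
    have := congrArg (Equiv.swap u₁ v₁) h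
    simpa using this
  · rw [Equiv.Perm.mul_apply, Equiv.swap_apply_left]

/-- For a uniformly random permutation `σ`, the probability that `σ u₁` and `σ u₂` are nonadjacent
is at most `1 - δ / (|U| - 1)`. As permutations act transitively on ordered pairs of distinct
vertices, the sum does not depend on the pair, and can be averaged over all pairs. -/
lemma sum_perm_compl {U : Type*} [Fintype U] [DecidableEq U] (K : SimpleGraph U)
    [DecidableRel K.Adj] (δ : ℝ) (hδ : ∀ v, δ ≤ (K.neighborSet v).ncard) {u₁ u₂ : U}
    (hu : u₁ ≠ u₂) :
    (∑ σ : Equiv.Perm U, if Kᶜ.Adj (σ u₁) (σ u₂) then (1 : ℝ) else 0) *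
      (Fintype.card U - 1) ≤ Fintype.card (Equiv.Perm U) * (Fintype.card U - 1 - δ) := by
  set X := ∑ σ : Equiv.Perm U, if Kᶜ.Adj (σ u₁) (σ u₂) then (1 : ℝ) else 0 with hX
  set n : ℝ := ((Fintype.card U : ℕ) : ℝ) with hn
  have hpos : 0 < n := by
    rw [hn]; exact_mod_cast Fintype.card_pos_iff.2 ⟨u₁⟩
  have hpair : ∀ v₁ v₂ : U, (∑ σ : Equiv.Perm U, if Kᶜ.Adj (σ v₁) (σ v₂) then (1 : ℝ) else 0)
      = if v₁ = v₂ then 0 else X := by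
    intro v₁ v₂
    split_ifs with hv
    · subst hv; simp
    · obtain ⟨τ, h₁, h₂⟩ := exists_perm_pair hu hv
      rw [hX, ← h₁, ← h₂]
      exact Equiv.sum_comp (Equiv.mulRight τ)
        (fun σ : Equiv.Perm U => if Kᶜ.Adj (σ u₁) (σ u₂) then (1 : ℝ) else 0)
  have h1 : ∑ v₁ : U, ∑ v₂ : U, ∑ σ : Equiv.Perm U,
      (if Kᶜ.Adj (σ v₁) (σ v₂) then (1 : ℝ) else 0) = n * ((n - 1) * X) := by
    simp_rw [hpair]
    have : ∀ v₁ : U, ∑ v₂ : U, (if v₁ = v₂ then 0 else X) = (n - 1) * X := by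
      intro v₁
      have h : ∀ v₂ : U, (if v₁ = v₂ then 0 else X) = X - if v₁ = v₂ then X else 0 := by
        intro v₂; split_ifs <;> simp
      simp_rw [h, Finset.sum_sub_distrib]
      simp [hn]; ring
    simp_rw [this]
    simp [hn]
  have h2 : ∑ v₁ : U, ∑ v₂ : U, ∑ σ : Equiv.Perm U,
      (if Kᶜ.Adj (σ v₁) (σ v₂) then (1 : ℝ) else 0) ≤
      Fintype.card (Equiv.Perm U) * (n * (n - 1 - δ)) := by
    have hsw : ∑ v₁ : U, ∑ v₂ : U, ∑ σ : Equiv.Perm U,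
        (if Kᶜ.Adj (σ v₁) (σ v₂) then (1 : ℝ) else 0) =
        ∑ σ : Equiv.Perm U, ∑ v₁ : U, ∑ v₂ : U, (if Kᶜ.Adj v₁ v₂ then (1 : ℝ) else 0) := by
      calc _ = ∑ v₁ : U, ∑ σ : Equiv.Perm U, ∑ v₂ : U,
          (if Kᶜ.Adj (σ v₁) (σ v₂) then (1 : ℝ) else 0) :=
            Finset.sum_congr rfl fun _ _ => Finset.sum_comm
        _ = ∑ σ : Equiv.Perm U, ∑ v₁ : U, ∑ v₂ : U,
          (if Kᶜ.Adj (σ v₁) (σ v₂) then (1 : ℝ) else 0) := Finset.sum_comm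
        _ = _ := by
          refine Finset.sum_congr rfl fun σ _ => ?_
          rw [← Equiv.sum_comp σ (fun v₁ => ∑ v₂ : U, (if Kᶜ.Adj v₁ v₂ then (1 : ℝ) else 0))]
          refine Finset.sum_congr rfl fun v₁ _ => ?_
          exact Equiv.sum_comp σ (fun v₂ => (if Kᶜ.Adj (σ v₁) v₂ then (1 : ℝ) else 0))
    rw [hsw, Finset.sum_const, nsmul_eq_mul, Finset.card_univ]
    refine mul_le_mul_of_nonneg_left ?_ (Nat.cast_nonneg _)
    calc ∑ v₁ : U, ∑ v₂ : U, (if Kᶜ.Adj v₁ v₂ then (1 : ℝ) else 0)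
        ≤ ∑ v₁ : U, (n - 1 - δ) := by
          refine Finset.sum_le_sum fun v _ => ?_
          rw [Finset.sum_boole, ← neighborFinset_eq_filter, card_neighborFinset_eq_degree,
            degree_compl]
          have h3 := hδ v
          rw [Set.ncard_eq_toFinset_card', ← SimpleGraph.neighborFinset,
            card_neighborFinset_eq_degree] at h3
          have h4 := K.degree_lt_card_verts v
          rw [Nat.cast_sub (by omega), Nat.cast_sub (by omega)]
          push_cast
          linarith
      _ = n * (n - 1 - δ) := by simp [hn]; ring
  rw [h1] at h2
  nlinarith

/-- The edges of `H` that the vertex placement `φ` sends to non-edges of `K`. The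
ends of an edge `e` are listed in the order chosen by `e.out`. -/
def badEdges {W U : Type*} (H : SimpleGraph W) (K : SimpleGraph U) (φ : W → U) : Set (Sym2 W) :=
  {e | e ∈ H.edgeSet ∧ ¬ K.Adj (φ e.out.1) (φ e.out.2)}

lemma adj_out {W : Type*} {H : SimpleGraph W} {e : Sym2 W} (he : e ∈ H.edgeSet) :
    H.Adj e.out.1 e.out.2 := by
  rw [← mem_edgeSet]
  have : s(e.out.1, e.out.2) = e := Quot.out_eq e
  rwa [this]

/-- Some injection of `W` into `U` does at least as well as the average of `σ ∘ φ₀` over all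
permutations `σ` of `U`, for a fixed injection `φ₀`. -/
lemma exists_placement {W U : Type*} [Fintype W] [Fintype U] (H : SimpleGraph W)
    (K : SimpleGraph U) (hcard : Fintype.card W ≤ Fintype.card U) (δ : ℝ)
    (hδ : ∀ v, δ ≤ (K.neighborSet v).ncard) :
    ∃ φ : W → U, Function.Injective φ ∧ ((badEdges H K φ).ncard : ℝ) * (Fintype.card U - 1) ≤
      H.edgeSet.ncard * (Fintype.card U - 1 - δ) := by
  classical
  obtain ⟨φ₀⟩ := Function.Embedding.nonempty_of_card_le hcard
  by_contra! hc
  have hbad : ∀ φ : W → U, Function.Injective φ → ((badEdges H K φ).ncard : ℝ) =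
      ∑ e ∈ H.edgeFinset, if Kᶜ.Adj (φ e.out.1) (φ e.out.2) then (1 : ℝ) else 0 := by
    intro φ hφ
    rw [Finset.sum_boole, Set.ncard_eq_toFinset_card']
    congr 2
    ext e
    rw [Set.mem_toFinset, Finset.mem_filter, mem_edgeFinset, compl_adj]
    exact ⟨fun h => ⟨h.1, fun h' => (adj_out h.1).ne (hφ h'), h.2⟩, fun h => ⟨h.1, h.2.2⟩⟩
  have h1 : ∑ σ : Equiv.Perm U, (H.edgeSet.ncard : ℝ) * (Fintype.card U - 1 - δ) <
      ∑ σ : Equiv.Perm U, ((badEdges H K (σ ∘ φ₀)).ncard : ℝ) * (Fintype.card U - 1) :=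
    Finset.sum_lt_sum_of_nonempty Finset.univ_nonempty fun σ _ =>
      hc _ (σ.injective.comp φ₀.injective)
  have h2 : ∑ σ : Equiv.Perm U, ((badEdges H K (σ ∘ φ₀)).ncard : ℝ) * (Fintype.card U - 1) ≤
      ∑ e ∈ H.edgeFinset, Fintype.card (Equiv.Perm U) * ((Fintype.card U : ℝ) - 1 - δ) := by
    calc _ = ∑ e ∈ H.edgeFinset, (∑ σ : Equiv.Perm U,
        if Kᶜ.Adj (σ (φ₀ e.out.1)) (σ (φ₀ e.out.2)) then (1 : ℝ) else 0) *
          (Fintype.card U - 1) := by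
          rw [← Finset.sum_mul, ← Finset.sum_mul, Finset.sum_comm]
          congr 1
          exact Finset.sum_congr rfl fun σ _ => hbad _ (σ.injective.comp φ₀.injective)
      _ ≤ _ := Finset.sum_le_sum fun e he =>
          sum_perm_compl K δ hδ (fun h => (adj_out (mem_edgeFinset.1 he)).ne (φ₀.injective h))
  rw [Finset.sum_const, nsmul_eq_mul, SimpleGraph.edgeFinset, ← Set.ncard_eq_toFinset_card'] at h2
  rw [Finset.sum_const, nsmul_eq_mul, Finset.card_univ] at h1
  nlinarith

lemma ncard_commonNeighbors_ge {U : Type*} [Fintype U] (K : SimpleGraph U) {x y : U}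
    (hxy : x ≠ y) (h : ¬ K.Adj x y) :
    (K.neighborSet x).ncard + (K.neighborSet y).ncard + 2 ≤
      (K.commonNeighbors x y).ncard + Fintype.card U := by
  have h1 := Set.ncard_union_add_ncard_inter (K.neighborSet x) (K.neighborSet y)
  have h2 : (K.neighborSet x ∪ K.neighborSet y) ⊆ ({x, y} : Set U)ᶜ := by
    rintro z (hz | hz) (rfl | rfl)
    · exact hz.ne rfl
    · exact h hz
    · exact h hz.symm
    · exact hz.ne rfl
  have h3 := Set.ncard_le_ncard h2 (Set.toFinite _)
  have h4 := Set.ncard_add_ncard_compl ({x, y} : Set U)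
  rw [Set.ncard_pair hxy, Nat.card_eq_fintype_card] at h4
  rw [commonNeighbors]
  omega

/-- Each bad edge is rerouted through its own common neighbour outside the placed vertices. The
common neighbours avoid the two ends, so at most `|W| - 2` of them are placed vertices, and as
many as there are bad edges remain: Hall's condition holds trivially. The rerouting vertex joins
the branch set of the first end `e.out.1`. -/
lemma isMinorOf_of_placement {W U : Type*} [Fintype W] [Fintype U] (H : SimpleGraph W)
    (K : SimpleGraph U) (φ : W → U) (hφ : Function.Injective φ)
    (hcn : ∀ x y, x ≠ y → ¬ K.Adj x y →
      Fintype.card W + (badEdges H K φ).ncard ≤ (K.commonNeighbors x y).ncard + 2) :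
    H.IsMinorOf K := by
  classical
  let T : badEdges H K φ → Finset U := fun e =>
    (K.commonNeighbors (φ e.1.out.1) (φ e.1.out.2) \ Set.range φ).toFinset
  have hT : ∀ e, (badEdges H K φ).ncard ≤ (T e).card := by
    rintro ⟨e, he⟩
    have hne : e.out.1 ≠ e.out.2 := (adj_out he.1).ne
    have h1 := hcn _ _ (fun h => hne (hφ h)) he.2
    have h2 : (K.commonNeighbors (φ e.out.1) (φ e.out.2) \ Set.range φ) =
        K.commonNeighbors (φ e.out.1) (φ e.out.2) \ φ '' ({e.out.1, e.out.2}ᶜ) := by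
      ext z
      simp only [Set.mem_sdiff, Set.mem_range, Set.mem_image, not_exists]
      refine and_congr_right fun hz => ⟨fun h w hw => h w hw.2, fun h w hw => h w ⟨?_, hw⟩⟩
      rintro (rfl | rfl)
      · exact hz.1.ne hw
      · exact hz.2.ne hw
    have h3 := Set.ncard_add_ncard_compl ({e.out.1, e.out.2} : Set W)
    rw [Set.ncard_pair hne, Nat.card_eq_fintype_card] at h3
    have h4 := Set.ncard_le_ncard_sdiff_add_ncard
      (K.commonNeighbors (φ e.out.1) (φ e.out.2)) (φ '' ({e.out.1, e.out.2}ᶜ)) (Set.toFinite _)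
    rw [Set.ncard_image_of_injective _ hφ, ← h2] at h4
    change _ ≤ (K.commonNeighbors (φ e.out.1) (φ e.out.2) \ Set.range φ).toFinset.card
    rw [← Set.ncard_eq_toFinset_card']
    omega
  obtain ⟨g, hg, hgT⟩ := (Finset.all_card_le_biUnion_card_iff_exists_injective T).1 (by
    intro s
    rcases s.eq_empty_or_nonempty with rfl | ⟨e, he⟩
    · simp
    · calc s.card ≤ (badEdges H K φ).ncard := by
            rw [← Nat.card_coe_set_eq, Nat.card_eq_fintype_card]; exact Finset.card_le_univ s
        _ ≤ (T e).card := hT e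
        _ ≤ _ := Finset.card_le_card (Finset.subset_biUnion_of_mem T he))
  have hgT' : ∀ e, K.Adj (φ e.1.out.1) (g e) ∧ K.Adj (φ e.1.out.2) (g e) ∧
      ∀ w, φ w ≠ g e := by
    intro e
    have := hgT e
    simp only [T, Set.mem_toFinset] at this
    exact ⟨this.1.1, this.1.2, fun w hw => this.2 ⟨w, hw⟩⟩
  refine ⟨fun w => {z | z = φ w ∨ ∃ e, e.1.out.1 = w ∧ z = g e}, ?_, ?_, ?_⟩
  · intro w
    refine connected_star K _ (φ w) (Or.inl rfl) ?_
    rintro z (rfl | ⟨e, rfl, rfl⟩)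
    · exact Or.inl rfl
    · exact Or.inr (hgT' e).1
  · intro w₁ w₂ hw
    rw [Set.disjoint_left]
    rintro z (rfl | ⟨e, rfl, rfl⟩) (h | ⟨e', h', h⟩)
    · exact hw (hφ h)
    · exact (hgT' e').2.2 _ h
    · exact (hgT' e).2.2 _ h.symm
    · exact hw (by rw [← h', hg h])
  · intro w₁ w₂ hw
    by_cases hK : K.Adj (φ w₁) (φ w₂)
    · exact ⟨_, Or.inl rfl, _, Or.inl rfl, hK⟩
    have hout : s((s(w₁, w₂)).out.1, (s(w₁, w₂)).out.2) = s(w₁, w₂) := Quot.out_eq _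
    have hcase := Sym2.eq_iff.1 hout
    have hbad : s(w₁, w₂) ∈ badEdges H K φ := by
      refine ⟨hw, fun h => hK ?_⟩
      rcases hcase with ⟨h₁, h₂⟩ | ⟨h₁, h₂⟩
      · rwa [h₁, h₂] at h
      · rw [h₁, h₂] at h; exact h.symm
    have hge := hgT' ⟨_, hbad⟩
    rcases hcase with ⟨h₁, h₂⟩ | ⟨h₁, h₂⟩
    · refine ⟨g ⟨_, hbad⟩, Or.inr ⟨⟨_, hbad⟩, h₁, rfl⟩, φ w₂, Or.inl rfl, ?_⟩
      have := hge.2.1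
      simp only [h₂] at this
      exact this.symm
    · refine ⟨φ w₁, Or.inl rfl, g ⟨_, hbad⟩, Or.inr ⟨⟨_, hbad⟩, h₁, rfl⟩, ?_⟩
      have := hge.2.1
      simp only [h₂] at this
      exact this

/-- A graph with at most `aD + 1` vertices and minimum degree at least `bD` contains `H`: on average
at most `q(a - b)/a` edges of `H` are placed on non-edges, and the bounds on `α` and `β`
guarantee enough common neighbours for them. -/
lemma isMinorOf_of_dense {W U : Type*} [Fintype W] [Fintype U] (H : SimpleGraph W)
    (K : SimpleGraph U) (D : ℕ) (a b α β : ℝ) (hD : Fintype.card W ≤ D) (hD1 : 1 ≤ D)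
    (hU : Nonempty U) (h0 : 0 < 2 * b - a) (h3 : 2 * b - a ≤ 3) (hba : b < a) (hb1 : 1 ≤ b)
    (hα : 4 / (2 * b - a) ≤ α) (hβ : 4 * (a - b) / (a * (2 * b - a)) ≤ β)
    (hd : α * (Fintype.card W : ℝ) + β * (H.edgeSet.ncard : ℝ) < 4 * (D + 1))
    (hn : (Fintype.card U : ℝ) ≤ a * D + 1) (hδ : ∀ v, b * D ≤ (K.neighborSet v).ncard) :
    H.IsMinorOf K := by
  classical
  obtain ⟨u⟩ := hU
  have hdeg : (K.neighborSet u).ncard < Fintype.card U := by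
    rw [Set.ncard_eq_toFinset_card', ← SimpleGraph.neighborFinset, card_neighborFinset_eq_degree]
    exact K.degree_lt_card_verts u
  have hDr : (1 : ℝ) ≤ D := by exact_mod_cast hD1
  have hDU : (D : ℝ) ≤ Fintype.card U - 1 := by
    have h1 := hδ u
    have h2 : ((K.neighborSet u).ncard : ℝ) + 1 ≤ Fintype.card U := by exact_mod_cast hdeg
    nlinarith
  have hDU' : D ≤ Fintype.card U := by
    have : (D : ℝ) ≤ Fintype.card U := by linarith
    exact_mod_cast this
  obtain ⟨φ, hφ, hbad⟩ := exists_placement H K (hD.trans hDU') (b * D) hδ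
  have ha : 0 < a := by linarith
  set n : ℝ := ((Fintype.card U : ℕ) : ℝ)
  set Q : ℝ := ((badEdges H K φ).ncard : ℝ)
  set q : ℝ := (H.edgeSet.ncard : ℝ)
  have hq : 0 ≤ q := Nat.cast_nonneg _
  have ht : (0 : ℝ) ≤ Fintype.card W := Nat.cast_nonneg _
  -- at most `q * (a - b) / a` edges of `H` are placed on non-edges
  have hQ : Q * a ≤ q * (a - b) := by
    have h1 : q * (n - 1 - b * D) * a ≤ q * (n - 1) * (a - b) := by
      have : 0 ≤ q * b * (a * D + 1 - n) := by
        have : 0 ≤ a * D + 1 - n := by linarith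
        have : 0 ≤ b := by linarith
        positivity
      nlinarith
    have h2 : Q * (n - 1) * a ≤ q * (n - 1 - b * D) * a := by gcongr
    have h3 : (Q * a) * (n - 1) ≤ (q * (a - b)) * (n - 1) := by linarith
    exact le_of_mul_le_mul_right h3 (by linarith)
  have hkey : (Fintype.card W : ℝ) + Q < (2 * b - a) * (D + 1) := by
    rw [div_le_iff₀ h0] at hα
    rw [div_le_iff₀ (by positivity)] at hβ
    have h1 : 4 * (Fintype.card W : ℝ) ≤ α * (2 * b - a) * Fintype.card W := by gcongr
    have h2 : 4 * (a - b) * q ≤ β * (a * (2 * b - a)) * q := by gcongr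
    have h3 : 4 * Q ≤ β * (2 * b - a) * q := by
      refine le_of_mul_le_mul_right ?_ ha
      linarith
    have h4 := mul_lt_mul_of_pos_right hd h0
    linarith
  refine isMinorOf_of_placement H K φ hφ fun x y hxy hadj => ?_
  have h5 := ncard_commonNeighbors_ge K hxy hadj
  have h6 : ((K.neighborSet x).ncard : ℝ) + (K.neighborSet y).ncard + 2 ≤
      (K.commonNeighbors x y).ncard + n := by simp only [n]; exact_mod_cast h5
  have h7 : (Fintype.card W : ℝ) + Q < (K.commonNeighbors x y).ncard + 2 := by
    linarith [hδ x, hδ y]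
  have h8 : Fintype.card W + (badEdges H K φ).ncard < (K.commonNeighbors x y).ncard + 2 := by
    simp only [Q] at h7; exact_mod_cast h7
  exact h8.le

/-! ### The four dense minors -/

/-- The subgraph induced on `S`, relabelled by `Fin S.ncard`. -/
lemma exists_fin_induce {U : Type*} [Fintype U] (M : SimpleGraph U) (S : Set U) :
    ∃ K : SimpleGraph (Fin S.ncard), K.IsMinorOf M ∧
      ∀ i, ∃ u ∈ S, (M.neighborSet u ∩ S).ncard ≤ (K.neighborSet i).ncard := by
  let e : S ≃ Fin S.ncard := Finite.equivFinOfCardEq (Nat.card_coe_set_eq S)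
  refine ⟨M.comap (fun i => (e.symm i : U)),
    isMinorOf_of_hom _ (Subtype.val_injective.comp e.symm.injective) fun u v h => h,
    fun i => ⟨e.symm i, (e.symm i).2, ?_⟩⟩
  have : M.neighborSet (e.symm i) ∩ S ⊆
      (fun j => (e.symm j : U)) '' (M.comap (fun i => (e.symm i : U))).neighborSet i := by
    rintro z ⟨hz, hzS⟩
    exact ⟨e ⟨z, hzS⟩, by simpa using hz, by simp⟩
  exact (Set.ncard_le_ncard this (Set.toFinite _)).trans (Set.ncard_image_le (Set.toFinite _))

/-- The closed neighbourhood of `v`, relabelled: in it, a neighbour `u` of `v` is adjacent to `v`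
and to the common neighbours of `u` and `v`. -/
lemma exists_closed_neighborhood {U : Type*} [Fintype U] (M : SimpleGraph U) (v : U) (s : ℝ)
    (hv : s ≤ (M.neighborSet v).ncard)
    (hs : ∀ u, M.Adj v u → s ≤ (M.commonNeighbors v u).ncard + 1) :
    ∃ K : SimpleGraph (Fin ((M.neighborSet v).ncard + 1)), K.IsMinorOf M ∧
      ∀ i, s ≤ (K.neighborSet i).ncard := by
  rw [← Set.ncard_insert_of_notMem (a := v) (s := M.neighborSet v) (fun h => h.ne rfl)
    (Set.toFinite _)]
  obtain ⟨K, hK, hdeg⟩ := exists_fin_induce M (insert v (M.neighborSet v))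
  refine ⟨K, hK, fun i => ?_⟩
  obtain ⟨u, hu, hi⟩ := hdeg i
  refine le_trans ?_ (Nat.cast_le.2 hi)
  rcases hu with rfl | hu
  · rwa [Set.inter_eq_left.2 (Set.subset_insert _ _)]
  · refine (hs u hu).trans ?_
    have : insert v (M.commonNeighbors v u) ⊆ M.neighborSet u ∩ insert v (M.neighborSet v) := by
      rintro z (rfl | hz)
      · exact ⟨hu.symm, Or.inl rfl⟩
      · exact ⟨hz.2, Or.inr hz.1⟩
    have h1 := Set.ncard_le_ncard this (Set.toFinite _)
    rw [Set.ncard_insert_of_notMem (fun h => h.1.ne rfl) (Set.toFinite _)] at h1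
    exact_mod_cast h1

/-- Mader's argument: the neighbourhood of a vertex of small degree in a minimal minor with at least
twice `D` edges per vertex. -/
lemma exists_mader {V : Type*} [Fintype V] [Nonempty V] (G : SimpleGraph V) (D : ℕ) (hD : 1 ≤ D)
    (h : 2 * D * Fintype.card V ≤ G.edgeSet.ncard) :
    ∃ (n : ℕ) (K : SimpleGraph (Fin n)), K.IsMinorOf G ∧ 0 < n ∧ n ≤ 4 * D ∧
      ∀ i, 2 * D ≤ (K.neighborSet i).ncard := by
  obtain ⟨m, M, hMG, h1m, -, hf, hf', hv, he⟩ := exists_minimal G (fun m => 2 * D * m) 1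
    (by rw [Nat.card_eq_fintype_card]; exact Fintype.card_pos)
    (by rw [Nat.card_eq_fintype_card]; exact_mod_cast h)
  have hE1 : 2 * D * m ≤ M.edgeSet.ncard := by exact_mod_cast hf
  have hE2 : M.edgeSet.ncard < 2 * D * m + 1 := by exact_mod_cast hf' (by positivity)
  have hEm := two_mul_ncard_edgeSet_le M
  rw [Fintype.card_fin] at hEm
  have hm2 : 2 ≤ m := by
    by_contra! hlt
    obtain rfl : m = 1 := by omega
    simp at hEm
    simp [hEm] at hE1
    omega
  have hstep : (2 * D * m : ℝ) - 2 * D * ((m - 1 : ℕ) : ℝ) = 2 * D := by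
    rw [Nat.cast_sub h1m]; push_cast; ring
  simp only [hstep] at hv he
  have : NeZero m := ⟨by omega⟩
  obtain ⟨v, hvd⟩ := exists_ncard_neighborSet_le M (4 * D) (by
    rw [Fintype.card_fin]; linarith)
  obtain ⟨K, hK, hdeg⟩ := exists_fin_induce M (M.neighborSet v)
  refine ⟨_, K, isMinorOf_trans hK hMG, ?_, hvd, fun i => ?_⟩
  · have := hv hm2 v
    have h2 : 2 * D < (M.neighborSet v).ncard := by exact_mod_cast this
    omega
  · obtain ⟨u, hu, hi⟩ := hdeg i
    refine le_trans ?_ hi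
    rw [Set.inter_comm]
    have := he hm2 v u hu
    have h2 : 2 * D < (M.commonNeighbors v u).ncard + 1 := by exact_mod_cast this
    exact Nat.lt_succ_iff.1 h2

/-- A graph with at most `4D` vertices and minimum degree at least `2D` has a minor with one of the
four combinations of order and minimum degree. The minimal minor is taken with respect to the
maximum of `f₁ m = Dm - D²/2` and `f₂ m = (1 + 1/c₁)Dm - Dn/c₁`. -/
lemma exists_four_cases {n : ℕ} (K : SimpleGraph (Fin n)) (D : ℕ) (hD : 1 ≤ D) (hn0 : 0 < n)
    (hn : n ≤ 4 * D) (hdeg : ∀ i, 2 * D ≤ (K.neighborSet i).ncard) (c₁ c₂ : ℝ) (hc₁ : 2 < c₁) :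
    ∃ (k : ℕ) (L : SimpleGraph (Fin k)), L.IsMinorOf K ∧ 0 < k ∧
      (((k : ℝ) ≤ (c₁ / 2 + 1) * D + 1 ∧ ∀ i, 2 * (D : ℝ) ≤ (L.neighborSet i).ncard) ∨
      ((k : ℝ) ≤ 2 * D + 1 ∧ ∀ i, (1 + 1 / c₁) * (D : ℝ) ≤ (L.neighborSet i).ncard) ∨
      ((k : ℝ) ≤ c₂ * D + 1 ∧ ∀ i, 1 * (D : ℝ) ≤ (L.neighborSet i).ncard) ∨
      ((k : ℝ) ≤ (4 - c₁ / 2) * D + 1 ∧ ∀ i, c₂ * (D : ℝ) ≤ (L.neighborSet i).ncard)) := by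
  by_cases hcase : (n : ℝ) ≤ (c₁ / 2 + 1) * D + 1
  · exact ⟨n, K, isMinorOf_of_hom id Function.injective_id fun _ _ h => h, hn0,
      Or.inl ⟨hcase, fun i => by exact_mod_cast hdeg i⟩⟩
  push Not at hcase
  have hDr : (1 : ℝ) ≤ D := by exact_mod_cast hD
  have hc0 : 0 < 1 / c₁ := by positivity
  have hcc : 1 / c₁ * c₁ = 1 := by field_simp
  have hnr : (n : ℝ) ≤ 4 * D := by exact_mod_cast hn
  have hn0r : (0 : ℝ) < n := by exact_mod_cast hn0
  set r : ℝ := 1 / c₁ with hr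
  let f₁ : ℕ → ℝ := fun m => D * m - (D : ℝ) ^ 2 / 2
  let f₂ : ℕ → ℝ := fun m => (1 + r) * D * m - r * D * n
  let f : ℕ → ℝ := fun m => max (f₁ m) (f₂ m)
  have hKE : (D * n : ℝ) ≤ K.edgeSet.ncard := by
    have h1 := sum_ncard_neighborSet K
    have h2 : ∑ i : Fin n, 2 * D ≤ ∑ i, (K.neighborSet i).ncard :=
      Finset.sum_le_sum fun i _ => hdeg i
    rw [h1, Finset.sum_const, Finset.card_univ, Fintype.card_fin, smul_eq_mul] at h2
    have h3 : D * n ≤ K.edgeSet.ncard := by nlinarith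
    exact_mod_cast h3
  have hnD : D ≤ n := by
    have : (D : ℝ) ≤ n := by nlinarith
    exact_mod_cast this
  obtain ⟨m, M, hMK, hDm, hmn, hf, hf', hv, he⟩ := exists_minimal K f D
    (by rwa [Nat.card_fin])
    (by
      rw [Nat.card_fin]
      refine max_le ?_ ?_
      · have : (0 : ℝ) ≤ (D : ℝ) ^ 2 := sq_nonneg _
        simp only [f₁]; linarith
      · simp only [f₂]; linarith)
  rw [Nat.card_fin] at hmn
  have hEm := two_mul_ncard_edgeSet_le M
  rw [Fintype.card_fin] at hEm
  -- at `m = D` the potential `f₁` is `D² / 2`, more than the number of pairs of vertices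
  have hDm1 : D + 1 ≤ m := by
    by_contra! hlt
    obtain rfl : m = D := by omega
    have h1 : f₁ m ≤ M.edgeSet.ncard := (le_max_left _ _).trans hf
    have h2 : (2 * M.edgeSet.ncard : ℝ) ≤ m * (m - 1) := by
      have := hEm
      rw [← Nat.cast_le (α := ℝ)] at this
      push_cast [Nat.cast_sub hD] at this
      exact this
    simp only [f₁] at h1
    nlinarith
  replace hv := hv hDm1
  replace he := he hDm1
  have hcast : ((m - 1 : ℕ) : ℝ) = m - 1 := by
    rw [Nat.cast_sub (by omega)]; simp
  have hDmr : (D : ℝ) + 1 ≤ m := by exact_mod_cast hDm1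
  have : NeZero m := ⟨by omega⟩
  by_cases hm : (n : ℝ) - c₁ / 2 * D ≤ m - 1
  -- here `f (m - 1) = f₂ (m - 1)`, so the larger increment `(1 + 1/c₁)D` is available
  · have hstep : (1 + r) * D ≤ f m - f (m - 1) := by
      have h1 : f (m - 1) = f₂ (m - 1) := by
        refine max_eq_right ?_
        simp only [f₁, f₂, hcast]
        have : 0 ≤ r * D * (m - 1 - (n - c₁ / 2 * D)) := by
          have : 0 ≤ (m : ℝ) - 1 - (n - c₁ / 2 * D) := by linarith
          positivity
        have h2 : r * D * (c₁ / 2 * D) = (D : ℝ) ^ 2 / 2 := by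
          linear_combination (D : ℝ) ^ 2 / 2 * hcc
        nlinarith
      have h2 : f₂ m ≤ f m := le_max_right _ _
      rw [h1]
      simp only [f₂, hcast] at h2 ⊢
      linarith
    have hfm : f m ≤ D * m := by
      refine max_le ?_ ?_
      · have : (0 : ℝ) ≤ (D : ℝ) ^ 2 := sq_nonneg _
        simp only [f₁]; linarith
      · have h1 : (m : ℝ) ≤ n := by exact_mod_cast hmn
        have : 0 ≤ r * D * (n - m) := by
          have : 0 ≤ (n : ℝ) - m := by linarith
          positivity
        simp only [f₂]; linarith
    have hf0 : 0 ≤ f m := by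
      refine le_trans ?_ (le_max_left _ _)
      simp only [f₁]; nlinarith
    have hEle : M.edgeSet.ncard ≤ D * m := by
      have h1 : (M.edgeSet.ncard : ℝ) < D * m + 1 := by linarith [hf' hf0]
      have h2 : M.edgeSet.ncard < D * m + 1 := by exact_mod_cast h1
      omega
    obtain ⟨v, hvd⟩ := exists_ncard_neighborSet_le M (2 * D) (by
      rw [Fintype.card_fin]; linarith)
    obtain ⟨L, hL, hLd⟩ := exists_closed_neighborhood M v ((1 + r) * D)
      (by linarith [hv v]) (fun u hu => by linarith [he v u hu])
    refine ⟨_, L, isMinorOf_trans hL hMK, Nat.succ_pos _, Or.inr (Or.inl ⟨?_, hLd⟩)⟩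
    have : ((M.neighborSet v).ncard : ℝ) ≤ 2 * D := by exact_mod_cast hvd
    push_cast
    linarith
  -- both potentials increase by at least `D` at each step
  · push Not at hm
    have hstep : (D : ℝ) ≤ f m - f (m - 1) := by
      have h1 : f (m - 1) ≤ f m - D := by
        refine max_le ?_ ?_
        · have h2 : f₁ m ≤ f m := le_max_left _ _
          simp only [f₁, hcast] at h2 ⊢
          linarith
        · have h2 : f₂ m ≤ f m := le_max_right _ _
          have : 0 ≤ r * D := by positivity
          simp only [f₂, hcast] at h2 ⊢
          linarith
      linarith
    by_cases hmin : ∃ v, ((M.neighborSet v).ncard : ℝ) ≤ c₂ * D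
    · obtain ⟨v, hvd⟩ := hmin
      obtain ⟨L, hL, hLd⟩ := exists_closed_neighborhood M v (1 * D)
        (by linarith [hv v]) (fun u hu => by linarith [he v u hu])
      refine ⟨_, L, isMinorOf_trans hL hMK, Nat.succ_pos _, Or.inr (Or.inr (Or.inl ⟨?_, hLd⟩))⟩
      push_cast
      linarith
    · push Not at hmin
      exact ⟨m, M, hMK, by omega, Or.inr (Or.inr (Or.inr ⟨by linarith, fun i => (hmin i).le⟩))⟩

end SparseMinor

/-- The general linear-bound machinery: with constants `c₁ > 2`, `c₂ > 1` and the derived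
parameters `aᵢ, bᵢ` satisfying `0 < 2bᵢ − aᵢ ≤ 3` and `bᵢ < aᵢ`, if `α ≥ 4` and `β`
satisfy `α ≥ 4/(2bᵢ − aᵢ)` and `β ≥ 4(aᵢ − bᵢ)/(aᵢ(2bᵢ − aᵢ))` for `1 ≤ i ≤ 4`, then
every graph with average degree at least `αt + βq` contains every graph with `t` vertices
and `q` edges as a minor. -/
theorem new_basic_method (c₁ c₂ : ℝ) (hc₁ : 2 < c₁) (hc₂ : 1 < c₂)
    (a b : Fin 4 → ℝ)
    (ha : a = ![c₁ / 2 + 1, 2, c₂, 4 - c₁ / 2])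
    (hb : b = ![2, 1 + 1 / c₁, 1, c₂])
    (hab : ∀ i : Fin 4, 0 < 2 * b i - a i ∧ 2 * b i - a i ≤ 3 ∧ b i < a i)
    (α β : ℝ) (hα4 : 4 ≤ α)
    (hα : ∀ i : Fin 4, 4 / (2 * b i - a i) ≤ α)
    (hβ : ∀ i : Fin 4, 4 * (a i - b i) / (a i * (2 * b i - a i)) ≤ β)
    {W V : Type*} [Fintype W] [Fintype V] [Nonempty V]
    (H : SimpleGraph W) (G : SimpleGraph V)
    (h : α * (Nat.card W : ℝ) + β * (H.edgeSet.ncard : ℝ) ≤ G.averageDegree) :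
    H.IsMinorOf G := by
  classical
  rw [Nat.card_eq_fintype_card] at h
  rcases isEmpty_or_nonempty W with hW | hW
  · exact ⟨fun _ => ∅, fun w => (hW.false w).elim, fun w => (hW.false w).elim,
      fun w => (hW.false w).elim⟩
  have a0 : a 0 = c₁ / 2 + 1 := by simp [ha]
  have a1 : a 1 = 2 := by simp [ha]
  have a2 : a 2 = c₂ := by simp [ha]
  have a3 : a 3 = 4 - c₁ / 2 := by simp [ha]
  have b0 : b 0 = 2 := by simp [hb]
  have b1 : b 1 = 1 + 1 / c₁ := by simp [hb]
  have b2 : b 2 = 1 := by simp [hb]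
  have b3 : b 3 = c₂ := by simp [hb]
  have hb1 : ∀ i, 1 ≤ b i := by
    have : 0 < 1 / c₁ := by positivity
    intro i
    fin_cases i
    · change 1 ≤ b 0; rw [b0]; norm_num
    · change 1 ≤ b 1; rw [b1]; linarith
    · change 1 ≤ b 2; rw [b2]
    · change 1 ≤ b 3; rw [b3]; exact hc₂.le
  have hβ0 : 0 ≤ β := by
    obtain ⟨h₁, h₂, h₃⟩ := hab 0
    refine le_trans ?_ (hβ 0)
    have : 0 < a 0 - b 0 := by linarith
    have : 0 < a 0 := by linarith
    positivity
  set t : ℝ := (Fintype.card W : ℝ) with ht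
  set q : ℝ := (H.edgeSet.ncard : ℝ) with hq
  have ht1 : 1 ≤ t := by rw [ht]; exact_mod_cast Fintype.card_pos
  have hq0 : 0 ≤ q := Nat.cast_nonneg _
  set D : ℕ := ⌊(α * t + β * q) / 4⌋₊ with hD
  have hD0 : t ≤ (α * t + β * q) / 4 := by
    have : 0 ≤ β * q := by positivity
    nlinarith
  have hDt : Fintype.card W ≤ D := Nat.le_floor hD0
  have hD1 : 1 ≤ D := le_trans Fintype.card_pos hDt
  have hDlt : α * t + β * q < 4 * (D + 1) := by
    have := Nat.lt_floor_add_one ((α * t + β * q) / 4)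
    linarith
  have hDle : 4 * (D : ℝ) ≤ α * t + β * q := by
    have := Nat.floor_le (show 0 ≤ (α * t + β * q) / 4 by linarith)
    linarith
  have hGE : 2 * D * Fintype.card V ≤ G.edgeSet.ncard := by
    have h1 : 4 * (D : ℝ) ≤ 2 * G.edgeSet.ncard / Fintype.card V := by
      rw [SimpleGraph.averageDegree, Nat.card_eq_fintype_card] at h
      exact hDle.trans h
    rw [le_div_iff₀ (by exact_mod_cast Fintype.card_pos)] at h1
    have h2 : 4 * D * Fintype.card V ≤ 2 * G.edgeSet.ncard := by exact_mod_cast h1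
    linarith
  obtain ⟨n, K, hKG, hn0, hn, hKd⟩ := SparseMinor.exists_mader G D hD1 hGE
  obtain ⟨k, L, hLK, hk, hL⟩ := SparseMinor.exists_four_cases K D hD1 hn0 hn hKd c₁ c₂ hc₁
  have final : ∀ i, (k : ℝ) ≤ a i * D + 1 → (∀ u, b i * D ≤ (L.neighborSet u).ncard) →
      H.IsMinorOf G := by
    intro i h₁ h₂
    obtain ⟨h₃, h₄, h₅⟩ := hab i
    refine SparseMinor.isMinorOf_trans ?_ (SparseMinor.isMinorOf_trans hLK hKG)
    exact SparseMinor.isMinorOf_of_dense H L D (a i) (b i) α β hDt hD1 ⟨⟨0, hk⟩⟩ h₃ h₄ h₅ (hb1 i)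
      (hα i) (hβ i) hDlt (by rwa [Fintype.card_fin]) h₂
  rcases hL with hL | hL | hL | hL
  · exact final 0 (by rw [a0]; exact hL.1) (by rw [b0]; exact hL.2)
  · exact final 1 (by rw [a1]; exact hL.1) (by rw [b1]; exact hL.2)
  · exact final 2 (by rw [a2]; exact hL.1) (by rw [b2]; exact hL.2)
  · exact final 3 (by rw [a3]; exact hL.1) (by rw [b3]; exact hL.2)
end
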